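/- arXiv:2203.15742 — 13 statements merged into one kernel-verified Lean document; each statement's English description precedes it below -/
import Mathlib

section
/- For every finite simple graph G on n vertices, the hopping forcing number satisfies δ(G) + 1 ≤ H(G) ≤ n, where δ(G) is the minimum degree of G. -/
/-!
The whole vertex set is a forcing set, which gives `H(G) ≤ n` and shows that the infimum
defining `H(G)` is attained. For the lower bound, the vertex performing the first force
(or any vertex, if none is performed) has its closed neighborhood inside the initial set
(`exists_closed_neighborhood`), so that set has at least `δ(G) + 1` elements.
-/

namespace Hopping

variable {V : Type*} [DecidableEq V]

/-- One round of simultaneous hopping forces.  A state is a pair `(blue, used)`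
consisting of the set of blue vertices and the set of vertices that have already
performed a force.  In one round, a collection `F` of forces `(v, w)` is
performed simultaneously: each forcing vertex `v` is blue, has not yet performed
a force, and has all of its neighbors blue; each forced vertex `w` is white;
distinct forces have distinct forcing vertices and distinct forced vertices. -/
def Round (G : SimpleGraph V) (S T : Finset V × Finset V) : Prop :=
  ∃ F : Finset (V × V),
    (∀ p ∈ F, p.1 ∈ S.1 ∧ p.1 ∉ S.2 ∧ (∀ w, G.Adj p.1 w → w ∈ S.1) ∧ p.2 ∉ S.1) ∧
    (∀ p ∈ F, ∀ q ∈ F, p ≠ q → p.1 ≠ q.1 ∧ p.2 ≠ q.2) ∧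
    T.1 = S.1 ∪ F.image Prod.snd ∧ T.2 = S.2 ∪ F.image Prod.fst

/-- `Reach G t S T` means that state `T` is reachable from state `S` in exactly
`t` rounds of simultaneous hopping forces. -/
def Reach (G : SimpleGraph V) : ℕ → Finset V × Finset V → Finset V × Finset V → Prop
  | 0, S, T => S = T
  | t + 1, S, T => ∃ U, Round G S U ∧ Reach G t U T

variable [Fintype V]

/-- `B` is a hopping forcing set of `G`: starting with exactly the vertices of
`B` blue (and no vertex having performed a force), some sequence of hopping
forces colors every vertex blue. -/
def IsForcingSet (G : SimpleGraph V) (B : Finset V) : Prop :=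
  ∃ t T, Reach G t (B, ∅) T ∧ T.1 = Finset.univ

/-- The hopping forcing number `H(G)`: the minimum size of a hopping forcing set. -/
noncomputable def forcingNumber (G : SimpleGraph V) : ℕ :=
  sInf {k | ∃ B : Finset V, B.card = k ∧ IsForcingSet G B}

/-- The hopping propagation time `pt_H(G; B)`: the least number of rounds of
simultaneous hopping forces needed to color every vertex blue starting from `B`,
or `∞` if `B` is not a hopping forcing set. -/
noncomputable def propTime (G : SimpleGraph V) (B : Finset V) : ℕ∞ :=
  sInf {t : ℕ∞ | ∃ t' : ℕ, t = (t' : ℕ∞) ∧ ∃ T, Reach G t' (B, ∅) T ∧ T.1 = Finset.univ}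

/-- The hopping throttling number `th_H(G) = min_B (|B| + pt_H(G;B))`. -/
noncomputable def throttling (G : SimpleGraph V) : ℕ∞ :=
  ⨅ B : Finset V, ((B.card : ℕ∞) + propTime G B)

end Hopping

/-- A set of blue vertices from which the whole graph can be colored contains a closed
neighborhood: rounds without forces change nothing, and the vertex performing a first force
has all its neighbors in the initial set; if no force is ever performed the set is already
everything. -/
theorem exists_closed_neighborhood {V : Type*} [Fintype V] [DecidableEq V] [Nonempty V]
    (G : SimpleGraph V) (t : ℕ) (S T : Finset V × Finset V)
    (h : Hopping.Reach G t S T) (hT : T.1 = Finset.univ) :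
    ∃ v ∈ S.1, ∀ w, G.Adj v w → w ∈ S.1 := by
  induction t generalizing S with
  | zero =>
    cases h
    rw [hT]
    exact ⟨Classical.arbitrary V, Finset.mem_univ _, fun w _ => Finset.mem_univ w⟩
  | succ t ih =>
    obtain ⟨U, ⟨F, hF, -, hU, -⟩, hR⟩ := h
    rcases F.eq_empty_or_nonempty with rfl | ⟨p, hp⟩
    · have hUS : U.1 = S.1 := by simpa using hU
      simpa only [hUS] using ih U hR
    · exact ⟨p.1, (hF p hp).1, (hF p hp).2.2.1⟩

/-- For every finite simple graph `G` on `n` vertices,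
`δ(G) + 1 ≤ H(G) ≤ n`. -/
theorem hoppingForcingNumber_bounds {V : Type*} [Fintype V] [DecidableEq V] [Nonempty V]
    (G : SimpleGraph V) [DecidableRel G.Adj] :
    G.minDegree + 1 ≤ Hopping.forcingNumber G ∧
      Hopping.forcingNumber G ≤ Fintype.card V := by
  have huniv : Fintype.card V ∈
      {k | ∃ B : Finset V, B.card = k ∧ Hopping.IsForcingSet G B} :=
    ⟨Finset.univ, Finset.card_univ, 0, (Finset.univ, ∅), rfl, rfl⟩
  refine ⟨?_, Nat.sInf_le huniv⟩
  refine le_csInf ⟨_, huniv⟩ ?_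
  rintro _ ⟨B, rfl, t, T, hR, hT⟩
  obtain ⟨v, hv, hN⟩ := exists_closed_neighborhood G t (B, ∅) T hR hT
  have hsub : insert v (G.neighborFinset v) ⊆ B := by
    intro w hw
    rcases Finset.mem_insert.1 hw with rfl | hw
    · exact hv
    · exact hN w ((G.mem_neighborFinset v w).1 hw)
  have hcard := Finset.card_le_card hsub
  rw [Finset.card_insert_of_notMem (G.notMem_neighborFinset_self v),
    G.card_neighborFinset_eq_degree] at hcard
  exact (Nat.succ_le_succ (G.minDegree_le_degree v)).trans hcard
end

section
/- For every finite simple graph G on n ≥ 1 vertices, H(G) = 1 if and only if G is isomorphic to the empty graph on n vertices (the graph with no edges). -/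
namespace Hopping

variable {V : Type*} [DecidableEq V]

/-- The state `S` has at most one blue vertex that has not yet forced (namely `u`), and every
vertex that has forced is isolated in `G`. -/
def SingleActive (G : SimpleGraph V) (S : Finset V × Finset V) : Prop :=
  ∃ u, (∀ v ∈ S.1, v ∉ S.2 → v = u) ∧ ∀ v ∈ S.2, ∀ w, ¬ G.Adj v w

lemma SingleActive.round {G : SimpleGraph V} {S T : Finset V × Finset V}
    (hS : SingleActive G S) (h : Round G S T) : SingleActive G T := by
  obtain ⟨u, hu, hiso⟩ := hS
  obtain ⟨F, hF, hinj, h1, h2⟩ := h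
  rcases F.eq_empty_or_nonempty with rfl | ⟨p, hp⟩
  · refine ⟨u, ?_, ?_⟩ <;> simpa [h1, h2]
  have hfst : ∀ q ∈ F, q.1 = u := fun q hq => hu _ (hF q hq).1 (hF q hq).2.1
  -- All forces in `F` are performed by `u`, so there is only one.
  have hFp : F = {p} := by
    refine Finset.eq_singleton_iff_unique_mem.2 ⟨hp, fun q hq => ?_⟩
    by_contra hne
    exact (hinj q hq p hp hne).1 ((hfst q hq).trans (hfst p hp).symm)
  -- The forced vertex becomes the only blue vertex that has not forced.
  refine ⟨p.2, fun v hv hv' => ?_, fun v hv w hvw => ?_⟩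
  · simp only [h1, h2, hFp, Finset.image_singleton, Finset.mem_union, Finset.mem_singleton,
      not_or] at hv hv'
    rcases hv with hv | hv
    · exact absurd ((hu v hv hv'.1).trans (hfst p hp).symm) hv'.2
    · exact hv
  · simp only [h2, hFp, Finset.image_singleton, Finset.mem_union, Finset.mem_singleton] at hv
    rcases hv with hv | rfl
    · exact hiso v hv w hvw
    · by_cases hw : w ∈ S.2
      · exact hiso w hw _ hvw.symm
      · exact hvw.ne ((hfst p hp).trans (hu w ((hF p hp).2.2.1 w hvw) hw).symm)

lemma SingleActive.reach {G : SimpleGraph V} {t : ℕ} {S T : Finset V × Finset V}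
    (hS : SingleActive G S) (h : Reach G t S T) : SingleActive G T := by
  induction t generalizing S with
  | zero => exact (show S = T from h) ▸ hS
  | succ t ih =>
    obtain ⟨U, hU, hT⟩ := h
    exact ih (hS.round hU) hT

lemma Reach.fst_eq_empty {G : SimpleGraph V} {t : ℕ} {S T : Finset V × Finset V}
    (h : Reach G t S T) (hS : S.1 = ∅) : T.1 = ∅ := by
  induction t generalizing S with
  | zero => exact (show S = T from h) ▸ hS
  | succ t ih =>
    obtain ⟨U, ⟨F, hF, -, h1, -⟩, hT⟩ := h
    have hF0 : F = ∅ := Finset.eq_empty_of_forall_notMem fun p hp => by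
      simpa [hS] using (hF p hp).1
    exact ih hT (by simp [h1, hS, hF0])

variable [Fintype V]

lemma eq_bot_of_isForcingSet_singleton {G : SimpleGraph V} {b : V}
    (h : IsForcingSet G {b}) : G = ⊥ := by
  obtain ⟨t, T, hT, huniv⟩ := h
  have hb : SingleActive G ({b}, ∅) := ⟨b, by simp, by simp⟩
  obtain ⟨u, hu, hiso⟩ := hb.reach hT
  have key : ∀ v w, G.Adj v w → v = u := fun v w hvw =>
    hu v (huniv ▸ Finset.mem_univ v) fun hv => hiso v hv w hvw
  ext v w
  simp only [SimpleGraph.bot_adj, iff_false]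
  exact fun hvw => hvw.ne ((key v w hvw).trans (key w v hvw.symm).symm)

/-- In the edgeless graph, any state with a blue vertex `u` that has not yet forced can be
completed. The hypothesis `S.2 ⊆ S.1` guarantees that a newly blue vertex has not forced. -/
lemma exists_reach_univ_bot (n : ℕ) (S : Finset V × Finset V) (hn : S.1ᶜ.card = n)
    (hsub : S.2 ⊆ S.1) {u : V} (hu : u ∈ S.1) (hu' : u ∉ S.2) :
    ∃ t T, Reach (⊥ : SimpleGraph V) t S T ∧ T.1 = Finset.univ := by
  induction n generalizing S u with
  | zero => exact ⟨0, S, rfl, by simpa using hn⟩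
  | succ n ih =>
    obtain ⟨w, hw⟩ : S.1ᶜ.Nonempty := Finset.card_pos.1 (by omega)
    have hw' : w ∉ S.1 := Finset.mem_compl.1 hw
    obtain ⟨t, T, hT, huniv⟩ := ih (S.1 ∪ {w}, S.2 ∪ {u}) (u := w)
      (by
        have h : (S.1 ∪ {w})ᶜ = S.1ᶜ.erase w := by ext; simp
        simp only [h, Finset.card_erase_of_mem hw]
        omega)
      (Finset.union_subset (hsub.trans Finset.subset_union_left) (by simp [hu]))
      (by simp)
      (by
        simp only [Finset.mem_union, Finset.mem_singleton, not_or]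
        exact ⟨fun h => hw' (hsub h), fun h => hw' (h ▸ hu)⟩)
    refine ⟨t + 1, T, ⟨_, ⟨{(u, w)}, ?_, ?_, ?_, ?_⟩, hT⟩, huniv⟩
    · simp [hu, hu', hw']
    · simp
    · simp
    · simp

lemma forcingNumber_eq_one_iff_eq_bot [Nonempty V] (G : SimpleGraph V) :
    forcingNumber G = 1 ↔ G = ⊥ := by
  constructor
  · intro h
    have hmem := Nat.sInf_mem (Nat.nonempty_of_sInf_eq_succ h)
    obtain ⟨B, hB, hforce⟩ := hmem
    obtain ⟨b, rfl⟩ := Finset.card_eq_one.1 (hB.trans h)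
    exact eq_bot_of_isForcingSet_singleton hforce
  · rintro rfl
    obtain ⟨b⟩ := ‹Nonempty V›
    have h1 : 1 ∈ {k | ∃ B : Finset V, B.card = k ∧ IsForcingSet ⊥ B} :=
      ⟨{b}, by simp, exists_reach_univ_bot _ ({b}, ∅) rfl (by simp) (u := b) (by simp) (by simp)⟩
    refine le_antisymm (Nat.sInf_le h1) (le_csInf ⟨1, h1⟩ ?_)
    rintro k ⟨B, rfl, t, T, hT, huniv⟩
    refine Finset.card_pos.2 (Finset.nonempty_iff_ne_empty.2 fun hB => ?_)
    have := hT.fst_eq_empty hB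
    exact Finset.notMem_empty b (this ▸ huniv ▸ Finset.mem_univ b)

end Hopping

/-- `H(G) = 1` iff `G` is isomorphic to the empty graph on `n` vertices. -/
theorem hoppingForcingNumber_eq_one_iff {V : Type*} [Fintype V] [DecidableEq V] [Nonempty V]
    (G : SimpleGraph V) :
    Hopping.forcingNumber G = 1 ↔
      Nonempty (G ≃g (⊥ : SimpleGraph (Fin (Fintype.card V)))) := by
  rw [Hopping.forcingNumber_eq_one_iff_eq_bot]
  constructor
  · rintro rfl
    exact ⟨⟨Fintype.equivFin V, by simp⟩⟩
  · rintro ⟨e⟩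
    ext v w
    rw [← e.map_adj_iff]
    simp
end

section
/- For every finite simple graph G on n vertices, H(G) = n if and only if G is isomorphic to the complete graph K_n. -/
namespace Hopping

/-- No force is possible in a complete graph: the forced vertex would be a white neighbor of the
forcing vertex. -/
theorem Round.eq_of_top {V : Type*} [DecidableEq V] {S T : Finset V × Finset V}
    (h : Round (⊤ : SimpleGraph V) S T) : T.1 = S.1 := by
  obtain ⟨F, hF, -, hT, -⟩ := h
  have hF' : F = ∅ := by
    refine Finset.eq_empty_of_forall_notMem fun p hp => ?_
    obtain ⟨h1, -, h3, h4⟩ := hF p hp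
    refine h4 (h3 p.2 ?_)
    rw [SimpleGraph.top_adj]
    intro he
    exact h4 (he ▸ h1)
  simpa [hF'] using hT

theorem Reach.eq_of_top {V : Type*} [DecidableEq V] {t : ℕ} {S T : Finset V × Finset V}
    (h : Reach (⊤ : SimpleGraph V) t S T) : T.1 = S.1 := by
  induction t generalizing S with
  | zero => exact congrArg Prod.fst (Eq.symm h)
  | succ t ih =>
    obtain ⟨U, hU, hR⟩ := h
    exact (ih hR).trans hU.eq_of_top

theorem eq_univ_of_isForcingSet_top {V : Type*} [DecidableEq V] [Fintype V] {B : Finset V}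
    (h : IsForcingSet (⊤ : SimpleGraph V) B) : B = Finset.univ := by
  obtain ⟨t, T, hR, hT⟩ := h
  exact hR.eq_of_top.symm.trans hT

theorem isForcingSet_univ {V : Type*} [DecidableEq V] [Fintype V] (G : SimpleGraph V) :
    IsForcingSet G Finset.univ :=
  ⟨0, _, rfl, rfl⟩

theorem isForcingSet_erase {V : Type*} [DecidableEq V] [Fintype V] {G : SimpleGraph V} {u w : V}
    (hne : u ≠ w) (hadj : ¬ G.Adj u w) : IsForcingSet G (Finset.univ.erase w) := by
  refine ⟨1, (Finset.univ, {u}), ⟨_, ⟨{(u, w)}, ?_, ?_, ?_, ?_⟩, rfl⟩, rfl⟩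
  · simp only [Finset.mem_singleton, forall_eq]
    refine ⟨by simp [hne], by simp, fun x hx => ?_, by simp⟩
    have : x ≠ w := by
      rintro rfl
      exact hadj hx
    simp [this]
  · simp
  · ext x
    by_cases h : x = w <;> simp [h]
  · simp

end Hopping

/-- `H(G) = n` iff `G` is isomorphic to the complete graph `K_n`. -/
theorem hoppingForcingNumber_eq_card_iff {V : Type*} [Fintype V] [DecidableEq V]
    (G : SimpleGraph V) :
    Hopping.forcingNumber G = Fintype.card V ↔
      Nonempty (G ≃g (⊤ : SimpleGraph (Fin (Fintype.card V)))) := by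
  constructor
  · intro h
    have htop : G = ⊤ := by
      ext u w
      rw [SimpleGraph.top_adj]
      refine ⟨fun h => h.ne, fun hne => ?_⟩
      by_contra hadj
      have hle : Hopping.forcingNumber G ≤ (Finset.univ.erase w).card :=
        Nat.sInf_le ⟨_, rfl, Hopping.isForcingSet_erase hne hadj⟩
      have hlt : (Finset.univ.erase w).card < Fintype.card V :=
        Finset.card_erase_lt_of_mem (Finset.mem_univ w)
      omega
    subst htop
    exact ⟨SimpleGraph.Iso.completeGraph (Fintype.equivFin V)⟩
  · rintro ⟨e⟩
    have htop : G = ⊤ := by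
      ext u w
      rw [← e.map_adj_iff]
      simp
    subst htop
    have hset : {k | ∃ B : Finset V, B.card = k ∧ Hopping.IsForcingSet (⊤ : SimpleGraph V) B} =
        {Fintype.card V} := by
      ext k
      constructor
      · rintro ⟨B, rfl, hB⟩
        rw [Hopping.eq_univ_of_isForcingSet_top hB]
        rfl
      · rintro rfl
        exact ⟨Finset.univ, rfl, Hopping.isForcingSet_univ _⟩
    rw [Hopping.forcingNumber, hset, csInf_singleton]
end

section
/- For every integer n ≥ 2, the path graph P_n on n vertices satisfies H(P_n) = 2. -/
namespace Hopping

/-- The state of the path game in which the first `k + 2` vertices are blue and the first `k` of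
them have already forced. -/
def pathState (n k : ℕ) : Finset (Fin n) × Finset (Fin n) :=
  (Finset.univ.filter fun v => v.val < k + 2, Finset.univ.filter fun v => v.val < k)

lemma round_pathState {n k : ℕ} (h : k + 2 < n) :
    Round (SimpleGraph.pathGraph n) (pathState n k) (pathState n (k + 1)) := by
  -- the only force of the round is `k → k + 2`
  refine ⟨{(⟨k, by omega⟩, ⟨k + 2, h⟩)}, ?_, ?_, ?_, ?_⟩
  · intro p hp
    rw [Finset.mem_singleton] at hp
    subst hp
    simp only [pathState, Finset.mem_filter, Finset.mem_univ, true_and,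
      SimpleGraph.pathGraph_adj]
    refine ⟨by omega, by omega, fun w hw => by omega, by omega⟩
  · intro p hp q hq hne
    rw [Finset.mem_singleton] at hp hq
    exact absurd (hp.trans hq.symm) hne
  · ext v
    simp only [pathState, Finset.mem_filter, Finset.mem_univ, true_and, Finset.mem_union,
      Finset.image_singleton, Finset.mem_singleton, Fin.ext_iff]
    omega
  · ext v
    simp only [pathState, Finset.mem_filter, Finset.mem_univ, true_and, Finset.mem_union,
      Finset.image_singleton, Finset.mem_singleton, Fin.ext_iff]
    omega

lemma reach_univ {n : ℕ} (t k : ℕ) (h : k + 2 + t = n) :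
    ∃ T, Reach (SimpleGraph.pathGraph n) t (pathState n k) T ∧ T.1 = Finset.univ := by
  induction t generalizing k with
  | zero =>
    refine ⟨_, rfl, ?_⟩
    ext v
    have := v.isLt
    simp only [pathState, Finset.mem_filter, Finset.mem_univ, true_and, iff_true]
    omega
  | succ t ih =>
    obtain ⟨T, hT, hu⟩ := ih (k + 1) (by omega)
    exact ⟨T, ⟨_, round_pathState (by omega), hT⟩, hu⟩

/-- If every blue vertex has a white neighbor, then the set of blue vertices never changes. -/
lemma reach_stuck {V : Type*} [DecidableEq V] (G : SimpleGraph V) (t : ℕ)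
    (S T : Finset V × Finset V) (hS : ∀ v ∈ S.1, ∃ w, G.Adj v w ∧ w ∉ S.1)
    (h : Reach G t S T) : T.1 = S.1 := by
  induction t generalizing S with
  | zero => exact congrArg Prod.fst (Eq.symm h)
  | succ t ih =>
    obtain ⟨U, ⟨F, hF, -, hU, -⟩, hT⟩ := h
    have hF0 : F = ∅ := by
      refine Finset.eq_empty_of_forall_notMem fun p hp => ?_
      obtain ⟨hb, -, hn, -⟩ := hF p hp
      obtain ⟨w, hw, hwS⟩ := hS _ hb
      exact hwS (hn w hw)
    have hUS : U.1 = S.1 := by simpa [hF0] using hU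
    rw [ih U (by rwa [hUS]) hT, hUS]

lemma two_le_card_of_isForcingSet {n : ℕ} (hn : 2 ≤ n) {B : Finset (Fin n)}
    (h : IsForcingSet (SimpleGraph.pathGraph n) B) : 2 ≤ B.card := by
  by_contra! hB
  obtain ⟨t, T, hT, hu⟩ := h
  have hTB : T.1 = B := by
    refine reach_stuck _ t (B, ∅) T (fun v hv => ?_) hT
    have : Nontrivial (Fin n) := Fin.nontrivial_iff_two_le.2 hn
    obtain ⟨w, hw⟩ := (SimpleGraph.pathGraph_preconnected n).exists_adj_of_nontrivial v
    exact ⟨w, hw, fun hwB => hw.ne (Finset.card_le_one.1 (Nat.le_of_lt_succ hB) v hv w hwB)⟩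
  rw [← hTB, hu, Finset.card_univ, Fintype.card_fin] at hB
  omega

lemma card_pathState_zero {n : ℕ} (hn : 2 ≤ n) : (pathState n 0).1.card = 2 := by
  have h : (pathState n 0).1 = {⟨0, by omega⟩, ⟨1, by omega⟩} := by
    ext v
    simp only [pathState, Finset.mem_filter, Finset.mem_univ, true_and, Finset.mem_insert,
      Finset.mem_singleton, Fin.ext_iff]
    omega
  rw [h]
  exact Finset.card_pair (by simp [Fin.ext_iff])

end Hopping

/-- For every `n ≥ 2`, the path graph `P_n` satisfies `H(P_n) = 2`. -/
theorem hoppingForcingNumber_pathGraph (n : ℕ) (hn : 2 ≤ n) :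
    Hopping.forcingNumber (SimpleGraph.pathGraph n) = 2 := by
  have hmem : 2 ∈ {k | ∃ B : Finset (Fin n), B.card = k ∧
      Hopping.IsForcingSet (SimpleGraph.pathGraph n) B} := by
    refine ⟨(Hopping.pathState n 0).1, Hopping.card_pathState_zero hn, n - 2, ?_⟩
    have h0 : ((Hopping.pathState n 0).1, ∅) = Hopping.pathState n 0 := by
      simp [Hopping.pathState]
    rw [h0]
    exact Hopping.reach_univ (n - 2) 0 (by omega)
  refine le_antisymm (Nat.sInf_le hmem) (le_csInf ⟨2, hmem⟩ ?_)
  rintro k ⟨B, rfl, hB⟩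
  exact Hopping.two_le_card_of_isForcingSet hn hB
end

section
/- For every integer n ≥ 3, the cycle graph C_n on n vertices satisfies H(C_n) = 3. -/
namespace Hopping

/-- Blue sets smaller than a closed neighborhood allow no force, so the state is stuck. -/
lemma reach_eq_of_card_lt {n : ℕ} {B : Finset (Fin (n + 3))} (hB : B.card < 3) (t : ℕ)
    (T : Finset (Fin (n + 3)) × Finset (Fin (n + 3)))
    (h : Reach (SimpleGraph.cycleGraph (n + 3)) t (B, ∅) T) : T = (B, ∅) := by
  induction t with
  | zero => exact h.symm
  | succ t ih =>
    obtain ⟨U, ⟨F, hF, -, h1, h2⟩, hr⟩ := h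
    have hF0 : F = ∅ := by
      rw [Finset.eq_empty_iff_forall_notMem]
      intro p hp
      obtain ⟨hv, -, hN, -⟩ := hF p hp
      have hsub : insert p.1 ((SimpleGraph.cycleGraph (n + 3)).neighborFinset p.1) ⊆ B := by
        intro x hx
        rw [Finset.mem_insert, SimpleGraph.mem_neighborFinset] at hx
        rcases hx with rfl | hx
        · exact hv
        · exact hN x hx
      have hc := Finset.card_le_card hsub
      rw [Finset.card_insert_of_notMem (by simp), SimpleGraph.card_neighborFinset_eq_degree,
        SimpleGraph.cycleGraph_degree_three_le] at hc
      omega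
    have hU : U = (B, ∅) := by
      subst hF0
      exact Prod.ext (by simpa using h1) (by simpa using h2)
    exact ih (hU ▸ hr)

/-- The invariant of the forcing process from `{0, 1, 2}`, by induction on the number `m` of
forces still to be made. -/
lemma exists_reach_univ (n m k : ℕ) (h : k + m = n) :
    ∃ T, Reach (SimpleGraph.cycleGraph (n + 3)) m
      (Finset.univ.filter (fun v : Fin (n + 3) => v.val < k + 3),
        Finset.univ.filter (fun v : Fin (n + 3) => 1 ≤ v.val ∧ v.val ≤ k)) T ∧
      T.1 = Finset.univ := by
  induction m generalizing k with
  | zero =>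
    refine ⟨_, rfl, ?_⟩
    ext v
    simp
    omega
  | succ m ih =>
    obtain ⟨T, hT, hu⟩ := ih (k + 1) (by omega)
    refine ⟨T, ⟨_, ⟨{(⟨k + 1, by omega⟩, ⟨k + 3, by omega⟩)}, ?_, ?_, ?_, ?_⟩, hT⟩, hu⟩
    · intro p hp
      rw [Finset.mem_singleton] at hp
      subst hp
      refine ⟨by simp, by simp, ?_, by simp⟩
      intro w hw
      rw [SimpleGraph.cycleGraph_adj'] at hw
      simp only [Finset.mem_filter, Finset.mem_univ, true_and]
      by_contra hlt
      -- Beyond `k + 2`, `w` is at cyclic distance at least `2` from `k + 1` in both directions.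
      have hlt' : (⟨k + 1, by omega⟩ : Fin (n + 3)) < w := Fin.lt_def.mpr (by simp only; omega)
      rw [Fin.coe_sub_iff_lt.mpr hlt', Fin.coe_sub_iff_le.mpr hlt'.le] at hw
      simp only at hw
      have := w.isLt
      omega
    · intro p hp q hq hpq
      rw [Finset.mem_singleton] at hp hq
      exact absurd (hp.trans hq.symm) hpq
    · ext v
      simp [Fin.ext_iff]
      omega
    · ext v
      simp [Fin.ext_iff]
      omega

end Hopping

/-- For every `n ≥ 3`, the cycle graph `C_n` satisfies `H(C_n) = 3`. -/
theorem hoppingForcingNumber_cycleGraph (n : ℕ) (hn : 3 ≤ n) :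
    Hopping.forcingNumber (SimpleGraph.cycleGraph n) = 3 := by
  obtain ⟨n, rfl⟩ := Nat.exists_eq_add_of_le' hn
  have hmem : 3 ∈ {k | ∃ B : Finset (Fin (n + 3)), B.card = k ∧
      Hopping.IsForcingSet (SimpleGraph.cycleGraph (n + 3)) B} := by
    refine ⟨Finset.univ.filter (fun v : Fin (n + 3) => v.val < 3), ?_, n, ?_⟩
    · rw [Fin.card_filter_val_lt]
      omega
    · have hused : Finset.univ.filter (fun v : Fin (n + 3) => 1 ≤ v.val ∧ v.val ≤ 0) = ∅ :=
        Finset.filter_eq_empty_iff.mpr fun v _ => by omega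
      have h := Hopping.exists_reach_univ n n 0 (by omega)
      rw [hused] at h
      simpa using h
  refine le_antisymm (Nat.sInf_le hmem) (le_csInf ⟨3, hmem⟩ ?_)
  rintro k ⟨B, rfl, t, T, hr, hT⟩
  by_contra hlt
  rw [Hopping.reach_eq_of_card_lt (by omega) t T hr] at hT
  have hcard := congrArg Finset.card hT
  simp at hcard
  omega
end

section
/- For every finite simple graph G, the hopping forcing number is at most one more than the zero forcing number: H(G) ≤ Z(G) + 1. -/
namespace Hopping

variable {V : Type*} [DecidableEq V]

/-- One step of the standard zero forcing color change rule: a blue vertex `v`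
forces its unique white neighbor `w` to become blue. -/
def ZStep (G : SimpleGraph V) (S T : Finset V) : Prop :=
  ∃ v ∈ S, ∃ w, w ∉ S ∧ G.Adj v w ∧ (∀ u, G.Adj v u → u ∉ S → u = w) ∧ T = insert w S

variable [Fintype V]

/-- `B` is a standard zero forcing set of `G`. -/
def IsZeroForcingSet (G : SimpleGraph V) (B : Finset V) : Prop :=
  Relation.ReflTransGen (ZStep G) B Finset.univ

/-- The zero forcing number `Z(G)`: the minimum size of a zero forcing set. -/
noncomputable def zeroForcingNumber (G : SimpleGraph V) : ℕ :=
  sInf {k | ∃ B : Finset V, B.card = k ∧ IsZeroForcingSet G B}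

end Hopping

namespace Hopping

/-- A single hopping force `v → w` is a round. -/
theorem round_single {V : Type*} [DecidableEq V] (G : SimpleGraph V) {S U : Finset V} {v w : V}
    (hv : v ∈ S) (hvU : v ∉ U) (hN : ∀ u, G.Adj v u → u ∈ S) (hw : w ∉ S) :
    Round G (S, U) (insert w S, insert v U) := by
  refine ⟨{(v, w)}, ?_, ?_, ?_, ?_⟩
  · intro p hp
    rw [Finset.mem_singleton] at hp
    subst hp
    exact ⟨hv, hvU, hN, hw⟩
  · intro p hp q hq hpq
    rw [Finset.mem_singleton] at hp hq
    exact absurd (hp.trans hq.symm) hpq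
  · ext x
    simp
  · ext x
    simp

/-- If `S` zero-forces the whole graph and is not everything, then one extra vertex `w` (the first
one to be zero-forced) suffices for hopping. The set `U` of vertices that have already forced is
arbitrary subject to having no white neighbor relative to `S`; this is what makes the next
zero-forcing vertex, which does have one, available for a hopping force. -/
theorem exists_insert_reach {V : Type*} [DecidableEq V] [Fintype V] (G : SimpleGraph V)
    {S : Finset V} (h : IsZeroForcingSet G S) (hS : S ≠ Finset.univ) :
    ∃ w, ∀ U : Finset V, (∀ u ∈ U, ∀ x, G.Adj u x → x ∈ S) →
      w ∉ S ∧ ∃ t T, Reach G t (insert w S, U) T ∧ T.1 = Finset.univ := by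
  unfold IsZeroForcingSet at h
  induction h using Relation.ReflTransGen.head_induction_on with
  | refl => exact absurd rfl hS
  | head hstep _ ih =>
    obtain ⟨v, hv, w, hw, hvw, huniq, rfl⟩ := hstep
    refine ⟨w, fun U hU => ⟨hw, ?_⟩⟩
    rename_i S _
    by_cases hfull : insert w S = Finset.univ
    · exact ⟨0, _, rfl, hfull⟩
    · obtain ⟨w', hw'⟩ := ih hfull
      have hN : ∀ u, G.Adj v u → u ∈ insert w S := by
        intro u hu
        by_cases huS : u ∈ S
        · exact Finset.mem_insert_of_mem huS
        · exact Finset.mem_insert.2 (Or.inl (huniq u hu huS))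
      obtain ⟨hw'S, t, T, hT, hTu⟩ := hw' (insert v U) (by
        intro u hu x hux
        rcases Finset.mem_insert.1 hu with rfl | hu
        · exact hN x hux
        · exact Finset.mem_insert_of_mem (hU u hu x hux))
      exact ⟨t + 1, T, ⟨_, round_single G (Finset.mem_insert_of_mem hv)
        (fun hvU => hw (hU v hvU w hvw)) hN hw'S, hT⟩, hTu⟩

end Hopping

/-- For every finite simple graph `G`, `H(G) ≤ Z(G) + 1`. -/
theorem hoppingForcingNumber_le_zeroForcingNumber_add_one {V : Type*} [Fintype V] [DecidableEq V]
    (G : SimpleGraph V) :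
    Hopping.forcingNumber G ≤ Hopping.zeroForcingNumber G + 1 := by
  obtain ⟨B, hcard, hB⟩ : Hopping.zeroForcingNumber G ∈
      {k | ∃ B : Finset V, B.card = k ∧ Hopping.IsZeroForcingSet G B} :=
    Nat.sInf_mem ⟨_, Finset.univ, rfl, Relation.ReflTransGen.refl⟩
  by_cases hfull : B = Finset.univ
  · have hle : Hopping.forcingNumber G ≤ B.card := Nat.sInf_le ⟨B, rfl, 0, _, rfl, hfull⟩
    omega
  · obtain ⟨w, hw⟩ := Hopping.exists_insert_reach G hB hfull
    obtain ⟨-, hreach⟩ := hw ∅ (by simp)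
    have hle : Hopping.forcingNumber G ≤ (insert w B).card := Nat.sInf_le ⟨_, rfl, hreach⟩
    have hins := Finset.card_insert_le w B
    omega
end

section
/- If G is a finite simple graph with Z(G) = δ(G), then H(G) = δ(G) + 1, where δ(G) is the minimum degree of G. -/
namespace Hopping

variable {V : Type*} [DecidableEq V]

/-- With at most `δ(G)` blue vertices no hopping force is possible. -/
theorem eq_of_reach [Fintype V] (G : SimpleGraph V) [DecidableRel G.Adj] (t : ℕ)
    (S T : Finset V × Finset V) (hS : S.1.card ≤ G.minDegree) (h : Reach G t S T) :
    T.1 = S.1 := by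
  induction t generalizing S with
  | zero => rw [show S = T from h]
  | succ t ih =>
    obtain ⟨U, ⟨F, hF, -, hU, -⟩, hr⟩ := h
    have hempty : F = ∅ := by
      refine Finset.eq_empty_of_forall_notMem fun p hp => ?_
      obtain ⟨h1, -, h3, -⟩ := hF p hp
      have hsub : insert p.1 (G.neighborFinset p.1) ⊆ S.1 := by
        intro x hx
        rcases Finset.mem_insert.1 hx with rfl | hx
        · exact h1
        · exact h3 x (by simpa using hx)
      have hc := Finset.card_le_card hsub
      rw [Finset.card_insert_of_notMem (by simp), G.card_neighborFinset_eq_degree] at hc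
      have := G.minDegree_le_degree p.1
      omega
    have hUS : U.1 = S.1 := by simp [hU, hempty]
    rw [ih U (hUS ▸ hS) hr, hUS]

/-- A hopping game with a vertex `v` ready to force can follow a zero forcing process one step
behind. The vertices already used have no white neighbours, so the next zero forcing vertex, which
has one, is unused; this keeps a vertex ready to force after each step. -/
theorem exists_reach_univ_s7 [Fintype V] (G : SimpleGraph V) (S : Finset V)
    (h : Relation.ReflTransGen (ZStep G) S Finset.univ) :
    ∀ (U : Finset V) (v : V), v ∈ S → v ∉ U → (∀ u, G.Adj v u → u ∈ S) →
      (∀ x ∈ U, ∀ u, G.Adj x u → u ∈ S) →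
      ∃ t T, Reach G t (S, U) T ∧ T.1 = Finset.univ := by
  induction h using Relation.ReflTransGen.head_induction_on with
  | refl => exact fun U v _ _ _ _ => ⟨0, _, rfl, rfl⟩
  | @head S C hstep _ ih =>
    intro U v hvS hvU hv hU
    obtain ⟨x, hx, w, hw, hxw, huniq, rfl⟩ := hstep
    obtain ⟨t, T, hr, hT⟩ := ih (insert v U) x (Finset.mem_insert_of_mem hx)
      (by
        intro hmem
        rcases Finset.mem_insert.1 hmem with rfl | hmem
        · exact hw (hv w hxw)
        · exact hw (hU x hmem w hxw))
      (by
        intro u hu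
        by_cases huS : u ∈ S
        · exact Finset.mem_insert_of_mem huS
        · rw [huniq u hu huS]
          exact Finset.mem_insert_self _ _)
      (by
        intro y hy u hu
        apply Finset.mem_insert_of_mem
        rcases Finset.mem_insert.1 hy with rfl | hy
        · exact hv u hu
        · exact hU y hy u hu)
    refine ⟨t + 1, T, ⟨(insert w S, insert v U), ⟨{(v, w)}, ?_, ?_, ?_, ?_⟩, hr⟩, hT⟩
    · intro p hp
      rw [Finset.mem_singleton.1 hp]
      exact ⟨hvS, hvU, hv, hw⟩
    · intro p hp q hq hpq
      exact absurd ((Finset.mem_singleton.1 hp).trans (Finset.mem_singleton.1 hq).symm) hpq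
    · ext; simp
    · ext; simp

end Hopping

/-- If `Z(G) = δ(G)`, then `H(G) = δ(G) + 1`. -/
theorem hoppingForcingNumber_of_zeroForcingNumber_eq_minDegree {V : Type*} [Fintype V]
    [DecidableEq V] [Nonempty V] (G : SimpleGraph V) [DecidableRel G.Adj]
    (h : Hopping.zeroForcingNumber G = G.minDegree) :
    Hopping.forcingNumber G = G.minDegree + 1 := by
  have hn : G.minDegree < Fintype.card V :=
    (G.minDegree_le_degree (Classical.arbitrary V)).trans_lt (G.degree_lt_card_verts _)
  obtain ⟨B, hB, hz⟩ : G.minDegree ∈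
      {k | ∃ B : Finset V, B.card = k ∧ Hopping.IsZeroForcingSet G B} := by
    rw [← h]
    exact Nat.sInf_mem ⟨_, Finset.univ, rfl, Relation.ReflTransGen.refl⟩
  obtain ⟨C, hC, hf⟩ : ∃ C : Finset V, C.card = G.minDegree + 1 ∧ Hopping.IsForcingSet G C := by
    rcases Relation.ReflTransGen.cases_head hz with rfl | ⟨C, ⟨v, hv, w, hw, -, huniq, rfl⟩, hC⟩
    · rw [Finset.card_univ] at hB
      omega
    · refine ⟨_, by rw [Finset.card_insert_of_notMem hw, hB],
        Hopping.exists_reach_univ_s7 G _ hC ∅ v (Finset.mem_insert_of_mem hv) (by simp) ?_ (by simp)⟩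
      intro u hu
      by_cases huB : u ∈ B
      · exact Finset.mem_insert_of_mem huB
      · rw [huniq u hu huB]
        exact Finset.mem_insert_self _ _
  apply le_antisymm
  · exact Nat.sInf_le ⟨C, hC, hf⟩
  · refine le_csInf ⟨_, C, hC, hf⟩ ?_
    rintro k ⟨D, rfl, t, T, hr, hT⟩
    by_contra hlt
    have hD : D.card ≤ G.minDegree := by omega
    have : T.1 = D := Hopping.eq_of_reach G t (D, ∅) T hD hr
    rw [hT] at this
    rw [← this, Finset.card_univ] at hD
    omega
end

section
/- Let G be the complete bipartite graph K_{s,t} with parts of sizes s and t, where 1 ≤ s ≤ t and t ≥ 2. Then the zero forcing number satisfies Z(G) = s + t − 2 and the hopping forcing number satisfies H(G) = s + 1. -/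
namespace Hopping

/-- Two distinct white vertices with the same neighborhood obstruct zero forcing: a vertex that
forces one of them would be adjacent to both. -/
lemma not_isZeroForcingSet_of_twins {V : Type*} [DecidableEq V] [Fintype V] {G : SimpleGraph V}
    {B : Finset V} {a b : V} (hab : a ≠ b) (h : ∀ v, G.Adj v a ↔ G.Adj v b)
    (ha : a ∉ B) (hb : b ∉ B) : ¬ IsZeroForcingSet G B := by
  intro hB
  have key : ∀ T, Relation.ReflTransGen (ZStep G) B T → a ∉ T ∧ b ∉ T := by
    intro T hT
    induction hT with
    | refl => exact ⟨ha, hb⟩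
    | tail _ hstep ih =>
      obtain ⟨v, -, w, -, hvw, huniq, rfl⟩ := hstep
      have hwa : a ≠ w := by
        rintro rfl
        exact hab (huniq b ((h v).1 hvw) ih.2).symm
      have hwb : b ≠ w := by
        rintro rfl
        exact hab (huniq a ((h v).2 hvw) ih.1)
      simp [hwa, hwb, ih.1, ih.2]
  exact (key _ hB).1 (Finset.mem_univ a)

lemma card_of_isZeroForcingSet {s t : ℕ} {B : Finset (Fin s ⊕ Fin t)}
    (hB : IsZeroForcingSet (completeBipartiteGraph (Fin s) (Fin t)) B) : s + t - 2 ≤ B.card := by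
  by_contra! hlt
  have hc : Bᶜ.card = s + t - B.card := by simp [Finset.card_compl]
  obtain ⟨a, ha, b, hb, hab, hside⟩ := Finset.exists_ne_map_eq_of_card_lt_of_maps_to
    (s := Bᶜ) (t := (Finset.univ : Finset Bool)) (f := Sum.isLeft)
    (by simp only [Finset.card_univ, Fintype.card_bool]; omega) (fun _ _ => Finset.mem_coe.2 (Finset.mem_univ _))
  refine not_isZeroForcingSet_of_twins hab ?_ (by simpa using ha) (by simpa using hb) hB
  intro v
  rcases a with a | a <;> rcases b with b | b <;> rcases v with v | v <;> simp_all

lemma exists_isZeroForcingSet {s t : ℕ} (hs : 1 ≤ s) (ht : 2 ≤ t) :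
    ∃ B : Finset (Fin s ⊕ Fin t), B.card = s + t - 2 ∧
      IsZeroForcingSet (completeBipartiteGraph (Fin s) (Fin t)) B := by
  let a : Fin s := ⟨0, hs⟩
  let b : Fin t := ⟨0, by omega⟩
  let c : Fin t := ⟨1, ht⟩
  have hcb : c ≠ b := by simp [c, b]
  refine ⟨{Sum.inl a, Sum.inr b}ᶜ, ?_, ?_⟩
  · rw [Finset.card_compl, Finset.card_pair (by simp)]
    simp
  · refine Relation.ReflTransGen.tail (b := {Sum.inr b}ᶜ) (Relation.ReflTransGen.single ?_) ?_
    · refine ⟨Sum.inr c, by simp [hcb], Sum.inl a, by simp, by simp, ?_, ?_⟩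
      · rintro (u | u) <;> simp
      · ext (u | u)
        · simp
        · simp
    · refine ⟨Sum.inl a, by simp, Sum.inr b, by simp, by simp, ?_, ?_⟩
      · rintro (u | u) <;> simp
      · ext u
        simp

/-- A blue set in which some vertex satisfies the hopping color change rule contains a whole side
and a vertex of the other side. -/
lemma card_of_force {s t : ℕ} (hst : s ≤ t) {B : Finset (Fin s ⊕ Fin t)} {v : Fin s ⊕ Fin t}
    (hv : v ∈ B) (hN : ∀ w, (completeBipartiteGraph (Fin s) (Fin t)).Adj v w → w ∈ B) :
    s + 1 ≤ B.card := by
  rcases v with i | j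
  · have hsub : insert (Sum.inl i) (Finset.univ.map Function.Embedding.inr) ⊆ B := by
      intro w hw
      rcases w with w | w
      · simp at hw; exact hw ▸ hv
      · exact hN _ (by simp)
    have := Finset.card_le_card hsub
    rw [Finset.card_insert_of_notMem (by simp)] at this
    simp at this
    omega
  · have hsub : insert (Sum.inr j) (Finset.univ.map Function.Embedding.inl) ⊆ B := by
      intro w hw
      rcases w with w | w
      · exact hN _ (by simp)
      · simp at hw; exact hw ▸ hv
    have := Finset.card_le_card hsub
    rw [Finset.card_insert_of_notMem (by simp)] at this
    simp at this
    omega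

lemma card_of_isForcingSet {s t : ℕ} (hst : s ≤ t) (ht : 2 ≤ t) {B : Finset (Fin s ⊕ Fin t)}
    (hB : IsForcingSet (completeBipartiteGraph (Fin s) (Fin t)) B) : s + 1 ≤ B.card := by
  by_contra! hlt
  -- Rounds without forces are allowed, so the blue set is shown to be constant along any run.
  have key : ∀ n S T, Reach (completeBipartiteGraph (Fin s) (Fin t)) n S T → S.1 = B →
      T.1 = B := by
    intro n
    induction n with
    | zero => rintro S T h hS; exact (show S = T from h) ▸ hS
    | succ n ih =>
      rintro S T ⟨U, ⟨F, hF, -, hU, -⟩, hR⟩ hS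
      refine ih U T hR ?_
      have hF0 : F = ∅ := by
        refine Finset.eq_empty_of_forall_notMem fun p hp => ?_
        obtain ⟨h1, -, h2, -⟩ := hF p hp
        rw [hS] at h1 h2
        exact absurd (card_of_force hst h1 h2) (by omega)
      simp [hU, hF0, hS]
  obtain ⟨n, T, hR, hT⟩ := hB
  have hBu : B = Finset.univ := (key n _ T hR rfl).symm.trans hT
  rw [hBu] at hlt
  simp at hlt
  omega

/-- The state after `k` rounds of the run in which each right vertex forces its successor: the left
side and the right vertices `0, …, k` are blue, and `0, …, k - 1` have forced. -/
def chainState (s t k : ℕ) : Finset (Fin s ⊕ Fin t) × Finset (Fin s ⊕ Fin t) :=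
  (Finset.univ.disjSum {j | j.val ≤ k}, Finset.disjSum ∅ {j | j.val < k})

lemma reach_chain {s t : ℕ} (m k : ℕ) (h : k + m < t) :
    Reach (completeBipartiteGraph (Fin s) (Fin t)) m (chainState s t k)
      (chainState s t (k + m)) := by
  induction m generalizing k with
  | zero => rfl
  | succ m ih =>
    refine ⟨chainState s t (k + 1), ?_, ?_⟩
    · refine ⟨{(Sum.inr ⟨k, by omega⟩, Sum.inr ⟨k + 1, by omega⟩)}, ?_, ?_, ?_, ?_⟩
      · simp [chainState, Fin.ext_iff]
        omega
      · simp
      · ext (u | u)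
        · simp [chainState]
        · simp [chainState, Fin.ext_iff]; omega
      · ext (u | u)
        · simp [chainState]
        · simp [chainState, Fin.ext_iff]
          grind
    · have := ih (k + 1) (by omega)
      rwa [show k + 1 + m = k + (m + 1) by omega] at this

lemma exists_isForcingSet {s t : ℕ} (ht : 2 ≤ t) :
    ∃ B : Finset (Fin s ⊕ Fin t), B.card = s + 1 ∧
      IsForcingSet (completeBipartiteGraph (Fin s) (Fin t)) B := by
  have h0 : ({j | j.val ≤ 0} : Finset (Fin t)) = {⟨0, by omega⟩} := by
    ext j
    simp [Fin.ext_iff]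
  have hused : (chainState s t 0).2 = ∅ := by
    ext (u | u) <;> simp [chainState]
  refine ⟨(chainState s t 0).1, ?_, t - 1, chainState s t (0 + (t - 1)), ?_, ?_⟩
  · simp only [chainState, h0, Finset.card_disjSum]
    simp
  · rw [← hused]
    exact reach_chain (t - 1) 0 (by omega)
  · ext (u | u)
    · simp [chainState]
    · simp [chainState]; omega

end Hopping

/-- For the complete bipartite graph `K_{s,t}` with `1 ≤ s ≤ t` and `t ≥ 2`,
`Z(K_{s,t}) = s + t - 2` and `H(K_{s,t}) = s + 1`. -/
theorem forcing_numbers_completeBipartite (s t : ℕ) (hs : 1 ≤ s) (hst : s ≤ t) (ht : 2 ≤ t) :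
    Hopping.zeroForcingNumber (completeBipartiteGraph (Fin s) (Fin t)) = s + t - 2 ∧
      Hopping.forcingNumber (completeBipartiteGraph (Fin s) (Fin t)) = s + 1 := by
  constructor
  · refine le_antisymm (Nat.sInf_le (Hopping.exists_isZeroForcingSet hs ht))
      (le_csInf ⟨_, Hopping.exists_isZeroForcingSet hs ht⟩ ?_)
    rintro k ⟨B, rfl, hB⟩
    exact Hopping.card_of_isZeroForcingSet hB
  · refine le_antisymm (Nat.sInf_le (Hopping.exists_isForcingSet ht))
      (le_csInf ⟨_, Hopping.exists_isForcingSet ht⟩ ?_)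
    rintro k ⟨B, rfl, hB⟩
    exact Hopping.card_of_isForcingSet hst ht hB
end

section
/- If G is a finite simple graph on n vertices with vertex connectivity κ, then the hopping throttling number satisfies th_H(G) ≥ ⌈2·√(n − κ) + κ − 1⌉. -/
namespace Hopping

/-- The vertex connectivity of `G`: the minimum number of vertices whose
deletion disconnects `G` or leaves a single vertex. -/
noncomputable def vertexConnectivity {V : Type*} [Fintype V] [DecidableEq V]
    (G : SimpleGraph V) : ℕ :=
  sInf {k | ∃ S : Finset V, S.card = k ∧
    (¬ (G.induce ((↑S)ᶜ : Set V)).Connected ∨ (Sᶜ : Finset V).card = 1)}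

end Hopping

namespace Hopping

variable {V : Type*} [DecidableEq V]

/-- The properties of a state `(blue, used)` that persist through the game started from `b` blue
vertices: used vertices are blue and have only blue neighbours, and exactly `b` blue vertices are
unused. -/
structure Inv (G : SimpleGraph V) (b : ℕ) (S : Finset V × Finset V) : Prop where
  subset : S.2 ⊆ S.1
  closed : ∀ v ∈ S.2, ∀ w, G.Adj v w → w ∈ S.1
  card : S.1.card = S.2.card + b

variable [Fintype V]

theorem vertexConnectivity_le_card_univ (G : SimpleGraph V) :
    vertexConnectivity G ≤ Fintype.card V := by
  refine Nat.sInf_le ⟨Finset.univ, rfl, Or.inl fun h => ?_⟩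
  obtain ⟨x, hx⟩ := h.nonempty
  simp at hx

/-- The blue vertices with a white neighbour separate a blue vertex having only blue neighbours
from any white vertex. -/
theorem vertexConnectivity_le_card_boundary (G : SimpleGraph V) (C N : Finset V)
    (hN : ∀ x, x ∈ N ↔ x ∈ C ∧ ∃ w, G.Adj x w ∧ w ∉ C)
    {v w : V} (hv : v ∈ C) (hvC : ∀ u, G.Adj v u → u ∈ C) (hw : w ∉ C) :
    vertexConnectivity G ≤ N.card := by
  refine Nat.sInf_le ⟨N, rfl, Or.inl fun h => ?_⟩
  have hvN : v ∉ N := fun hh => by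
    obtain ⟨_, u, hu, hu'⟩ := (hN v).1 hh
    exact hu' (hvC u hu)
  have hwN : w ∉ N := fun hh => hw ((hN w).1 hh).1
  have key : ∀ x y : ((↑N)ᶜ : Set V),
      (G.induce ((↑N)ᶜ : Set V)).Walk x y → (x : V) ∈ C → (y : V) ∈ C := by
    intro x y p
    induction p with
    | nil => exact id
    | @cons a c d hac _ ih =>
      intro ha
      refine ih ?_
      by_contra hc
      exact a.2 (Finset.mem_coe.2 ((hN _).2 ⟨ha, _, hac, hc⟩))
  obtain ⟨p⟩ := h.preconnected ⟨v, by simpa using hvN⟩ ⟨w, by simpa using hwN⟩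
  exact hw (key _ _ p hv)

/-- A round preserves the invariant and performs at most `b - κ` forces.  The subtraction truncates:
if `b < κ`, no force can be performed. -/
theorem Round.step {G : SimpleGraph V} {b : ℕ} {S T : Finset V × Finset V}
    (h : Round G S T) (hS : Inv G b S) :
    Inv G b T ∧ T.1.card ≤ S.1.card + (b - vertexConnectivity G) := by
  classical
  obtain ⟨F, hF, hinj, h1, h2⟩ := h
  have c1 : (F.image Prod.fst).card = F.card := Finset.card_image_of_injOn fun p hp q hq e => by
    by_contra hne
    exact (hinj p hp q hq hne).1 e
  have c2 : (F.image Prod.snd).card = F.card := Finset.card_image_of_injOn fun p hp q hq e => by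
    by_contra hne
    exact (hinj p hp q hq hne).2 e
  have d1 : Disjoint S.2 (F.image Prod.fst) := by
    rw [Finset.disjoint_right]
    intro x hx
    obtain ⟨p, hp, rfl⟩ := Finset.mem_image.1 hx
    exact (hF p hp).2.1
  have d2 : Disjoint S.1 (F.image Prod.snd) := by
    rw [Finset.disjoint_right]
    intro x hx
    obtain ⟨p, hp, rfl⟩ := Finset.mem_image.1 hx
    exact (hF p hp).2.2.2
  have t1 : T.1.card = S.1.card + F.card := by rw [h1, Finset.card_union_of_disjoint d2, c2]
  have t2 : T.2.card = S.2.card + F.card := by rw [h2, Finset.card_union_of_disjoint d1, c1]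
  have hsub : S.1 ⊆ T.1 := h1 ▸ Finset.subset_union_left
  refine ⟨⟨fun x hx => hsub ?_, fun v hv w hvw => hsub ?_, by have := hS.card; omega⟩, ?_⟩
  · rw [h2, Finset.mem_union] at hx
    rcases hx with hx | hx
    · exact hS.subset hx
    · obtain ⟨p, hp, rfl⟩ := Finset.mem_image.1 hx
      exact (hF p hp).1
  · rw [h2, Finset.mem_union] at hv
    rcases hv with hv | hv
    · exact hS.closed v hv w hvw
    · obtain ⟨p, hp, rfl⟩ := Finset.mem_image.1 hv
      exact (hF p hp).2.2.1 w hvw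
  · rcases F.eq_empty_or_nonempty with rfl | ⟨p, hp⟩
    · simp [t1]
    let N : Finset V := S.1.filter fun x => ∃ w, G.Adj x w ∧ w ∉ S.1
    have hN : ∀ x, x ∈ N ↔ x ∈ S.1 ∧ ∃ w, G.Adj x w ∧ w ∉ S.1 := fun x => Finset.mem_filter
    have hκ : vertexConnectivity G ≤ N.card :=
      vertexConnectivity_le_card_boundary G S.1 N hN (hF p hp).1 (hF p hp).2.2.1 (hF p hp).2.2.2
    -- `T.2` consists of all vertices used up to and including this round.
    have dN : Disjoint N T.2 := by
      rw [Finset.disjoint_left]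
      intro x hx hxT
      obtain ⟨_, w, hxw, hw⟩ := (hN x).1 hx
      rw [h2, Finset.mem_union] at hxT
      rcases hxT with hxT | hxT
      · exact hw (hS.closed x hxT w hxw)
      · obtain ⟨q, hq, rfl⟩ := Finset.mem_image.1 hxT
        exact hw ((hF q hq).2.2.1 w hxw)
    have hNT : N ∪ T.2 ⊆ S.1 := by
      refine Finset.union_subset (Finset.filter_subset _ _) ?_
      rw [h2]
      refine Finset.union_subset hS.subset fun x hx => ?_
      obtain ⟨q, hq, rfl⟩ := Finset.mem_image.1 hx
      exact (hF q hq).1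
    have hle := Finset.card_le_card hNT
    rw [Finset.card_union_of_disjoint dN] at hle
    have := hS.card
    omega

theorem Reach.card_le {G : SimpleGraph V} {b : ℕ} {T : Finset V × Finset V} (t : ℕ) :
    ∀ {S : Finset V × Finset V}, Reach G t S T → Inv G b S →
      T.1.card ≤ S.1.card + t * (b - vertexConnectivity G) := by
  induction t with
  | zero =>
    rintro S rfl _
    simp
  | succ t ih =>
    rintro S ⟨U, hSU, hUT⟩ hS
    obtain ⟨hU, hc⟩ := hSU.step hS
    have := ih hUT hU
    rw [Nat.succ_mul]
    omega

/-- The throttling bound for one initial set and one number of rounds. -/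
theorem le_card_add_rounds {G : SimpleGraph V} {B : Finset V} {t : ℕ} {T : Finset V × Finset V}
    (h : Reach G t (B, ∅) T) (hT : T.1 = Finset.univ) :
    2 * Real.sqrt ((Fintype.card V : ℝ) - (vertexConnectivity G : ℝ)) +
      (vertexConnectivity G : ℝ) - 1 ≤ (B.card : ℝ) + t := by
  have hn : Fintype.card V ≤ B.card + t * (B.card - vertexConnectivity G) := by
    have := h.card_le t (b := B.card) ⟨by simp, by simp, by simp⟩
    rwa [hT, Finset.card_univ] at this
  have hκ := vertexConnectivity_le_card_univ G
  have hB : vertexConnectivity G ≤ B.card := by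
    by_contra hlt
    have h0 : B.card - vertexConnectivity G = 0 := by omega
    rw [h0] at hn
    omega
  obtain ⟨d, hd⟩ := Nat.exists_eq_add_of_le hB
  rw [hd, Nat.add_sub_cancel_left] at hn
  rw [hd]
  have hn' : (Fintype.card V : ℝ) ≤ vertexConnectivity G + d + t * d := by exact_mod_cast hn
  have hs : Real.sqrt ((Fintype.card V : ℝ) - (vertexConnectivity G : ℝ)) ≤ (d + t + 1) / 2 := by
    refine Real.sqrt_le_iff.2 ⟨by positivity, ?_⟩
    nlinarith [sq_nonneg ((d : ℝ) - (t + 1))]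
  push_cast
  linarith

end Hopping

/-- If `G` has `n` vertices and vertex connectivity `κ`, then
`th_H(G) ≥ ⌈2√(n - κ) + κ - 1⌉`. -/
theorem hoppingThrottling_ge_of_vertexConnectivity {V : Type*} [Fintype V] [DecidableEq V]
    (G : SimpleGraph V) :
    (⌈2 * Real.sqrt ((Fintype.card V : ℝ) - (Hopping.vertexConnectivity G : ℝ)) +
        (Hopping.vertexConnectivity G : ℝ) - 1⌉₊ : ℕ∞) ≤ Hopping.throttling G := by
  refine le_iInf fun B => ?_
  unfold Hopping.propTime
  rcases Set.eq_empty_or_nonempty {t : ℕ∞ | ∃ t' : ℕ, t = (t' : ℕ∞) ∧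
    ∃ T, Hopping.Reach G t' (B, ∅) T ∧ T.1 = Finset.univ} with he | hne
  · rw [he, sInf_empty, add_top]
    exact le_top
  · obtain ⟨t, ht, T, hr, hT⟩ := csInf_mem hne
    rw [ht]
    have hle : ⌈2 * Real.sqrt ((Fintype.card V : ℝ) - (Hopping.vertexConnectivity G : ℝ)) +
        (Hopping.vertexConnectivity G : ℝ) - 1⌉₊ ≤ B.card + t := by
      refine Nat.ceil_le.2 ?_
      push_cast
      exact Hopping.le_card_add_rounds hr hT
    exact_mod_cast hle
end

section
/- For every integer n ≥ 1, the empty graph on n vertices (the graph with no edges) has hopping throttling number th_H = ⌈2·√n − 1⌉. -/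
namespace HoppingEmpty

open Hopping

/-- The number `b` of blue vertices that have not forced is invariant, and bounds the number of
vertices colored in a round. -/
lemma round_card {V : Type*} [DecidableEq V] {G : SimpleGraph V} {S T : Finset V × Finset V}
    {b : ℕ} (h : Round G S T) (hS : S.2 ⊆ S.1) (hb : S.1.card = S.2.card + b) :
    T.2 ⊆ T.1 ∧ T.1.card = T.2.card + b ∧ T.1.card ≤ S.1.card + b := by
  obtain ⟨F, hF, hinj, h1, h2⟩ := h
  have i1 : (F.image Prod.fst).card = F.card :=
    Finset.card_image_of_injOn fun p hp q hq e => by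
      by_contra hne
      exact (hinj p hp q hq hne).1 e
  have i2 : (F.image Prod.snd).card = F.card :=
    Finset.card_image_of_injOn fun p hp q hq e => by
      by_contra hne
      exact (hinj p hp q hq hne).2 e
  have sub : F.image Prod.fst ⊆ S.1 \ S.2 := by
    intro v hv
    obtain ⟨p, hp, rfl⟩ := Finset.mem_image.1 hv
    exact Finset.mem_sdiff.2 ⟨(hF p hp).1, (hF p hp).2.1⟩
  have d1 : Disjoint S.1 (F.image Prod.snd) := by
    refine Finset.disjoint_right.2 fun v hv => ?_
    obtain ⟨p, hp, rfl⟩ := Finset.mem_image.1 hv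
    exact (hF p hp).2.2.2
  have d2 : Disjoint S.2 (F.image Prod.fst) :=
    Finset.disjoint_right.2 fun v hv => (Finset.mem_sdiff.1 (sub hv)).2
  have c1 : T.1.card = S.1.card + F.card := by
    rw [h1, Finset.card_union_of_disjoint d1, i2]
  have c2 : T.2.card = S.2.card + F.card := by
    rw [h2, Finset.card_union_of_disjoint d2, i1]
  have c3 : F.card ≤ b := by
    have := Finset.card_le_card sub
    rw [i1, Finset.card_sdiff_of_subset hS] at this
    omega
  refine ⟨?_, by omega, by omega⟩
  rw [h1, h2]
  exact Finset.union_subset (hS.trans Finset.subset_union_left)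
    ((sub.trans Finset.sdiff_subset).trans Finset.subset_union_left)

lemma reach_card_le {V : Type*} [DecidableEq V] {G : SimpleGraph V} {b : ℕ} (t : ℕ) :
    ∀ {S T : Finset V × Finset V}, Reach G t S T → S.2 ⊆ S.1 → S.1.card = S.2.card + b →
      T.1.card ≤ S.1.card + t * b := by
  induction t with
  | zero =>
    intro S T h _ _
    cases h
    simp
  | succ t ih =>
    rintro S T ⟨U, hSU, hUT⟩ hS hb
    obtain ⟨hU, hUb, hle⟩ := round_card hSU hS hb
    have := ih hUT hU hUb
    rw [Nat.succ_mul]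
    omega

/-- In the empty graph, any set of blue vertices that have not forced can force any set of white
vertices of the same size in a single round. -/
lemma round_bot {V : Type*} [DecidableEq V] {S : Finset V × Finset V} {A W : Finset V}
    (hA : A ⊆ S.1 \ S.2) (hW : Disjoint S.1 W) (h : A.card = W.card) :
    Round (⊥ : SimpleGraph V) S (S.1 ∪ W, S.2 ∪ A) := by
  let e := Finset.equivOfCardEq h
  refine ⟨A.attach.image fun a : A => ((a : V), (e a : V)), ?_, ?_, ?_, ?_⟩
  · intro p hp
    obtain ⟨a, -, rfl⟩ := Finset.mem_image.1 hp
    have ha := Finset.mem_sdiff.1 (hA a.2)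
    exact ⟨ha.1, ha.2, fun w hw => hw.elim, Finset.disjoint_right.1 hW (e a).2⟩
  · intro p hp q hq hne
    obtain ⟨a, -, rfl⟩ := Finset.mem_image.1 hp
    obtain ⟨c, -, rfl⟩ := Finset.mem_image.1 hq
    have hac : a ≠ c := by
      rintro rfl
      exact hne rfl
    exact ⟨fun h => hac (Subtype.ext h), fun h => hac (e.injective (Subtype.ext h))⟩
  · change S.1 ∪ W = S.1 ∪ _
    congr 1
    ext w
    simp only [Finset.mem_image, Finset.mem_attach, true_and, exists_exists_eq_and]
    constructor
    · intro hw
      exact ⟨e.symm ⟨w, hw⟩, by simp⟩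
    · rintro ⟨a, rfl⟩
      exact (e a).2
  · change S.2 ∪ A = S.2 ∪ _
    congr 1
    ext v
    simp

/-- In the empty graph, `b` further vertices can be colored in every round, until none is left. -/
lemma exists_reach_card {V : Type*} [DecidableEq V] [Fintype V] {b : ℕ} (t : ℕ) :
    ∀ S : Finset V × Finset V, S.2 ⊆ S.1 → S.1.card = S.2.card + b →
      ∃ T, Reach (⊥ : SimpleGraph V) t S T ∧
        min (Fintype.card V) (S.1.card + t * b) ≤ T.1.card := by
  induction t with
  | zero =>
    intro S _ _
    exact ⟨S, rfl, by simp⟩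
  | succ t ih =>
    intro S hS hb
    have hc := Finset.card_compl S.1
    have hd := Finset.card_sdiff_of_subset hS
    have hle := Finset.card_le_univ S.1
    obtain ⟨A, hA, hAc⟩ := Finset.exists_subset_card_eq
      (s := S.1 \ S.2) (n := min b (S.1ᶜ).card) (by omega)
    obtain ⟨W, hW, hWc⟩ := Finset.exists_subset_card_eq
      (s := S.1ᶜ) (n := min b (S.1ᶜ).card) (by omega)
    have hdis : Disjoint S.1 W :=
      Finset.disjoint_right.2 fun w hw => Finset.mem_compl.1 (hW hw)
    have hR := round_bot hA hdis (hAc.trans hWc.symm)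
    obtain ⟨h1, h2, -⟩ := round_card hR hS hb
    obtain ⟨T, hT, hTc⟩ := ih _ h1 h2
    refine ⟨T, ⟨_, hR, hT⟩, le_trans ?_ hTc⟩
    have hcard : (S.1 ∪ W).card = S.1.card + min b (S.1ᶜ).card := by
      rw [Finset.card_union_of_disjoint hdis, hWc]
    simp only [hcard, Nat.succ_mul]
    omega

lemma ceil_le_iff (n k : ℕ) :
    ⌈2 * Real.sqrt (n : ℝ) - 1⌉₊ ≤ k ↔ 4 * n ≤ (k + 1) ^ 2 := by
  rw [Nat.ceil_le]
  have h0 : (0 : ℝ) ≤ n := Nat.cast_nonneg n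
  have hk : (0 : ℝ) ≤ k := Nat.cast_nonneg k
  have hs := Real.sqrt_nonneg (n : ℝ)
  have hsq := Real.sq_sqrt h0
  rw [← Nat.cast_le (α := ℝ)]
  push_cast
  constructor
  · intro h
    nlinarith
  · intro h
    have : 2 * Real.sqrt (n : ℝ) ≤ k + 1 := by
      apply le_of_sq_le_sq _ (by positivity)
      nlinarith
    linarith

end HoppingEmpty

/-- For every `n ≥ 1`, the empty graph on `n` vertices has hopping throttling
number `⌈2√n - 1⌉`. -/
theorem hoppingThrottling_empty (n : ℕ) (hn : 1 ≤ n) :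
    Hopping.throttling (⊥ : SimpleGraph (Fin n)) =
      (⌈2 * Real.sqrt (n : ℝ) - 1⌉₊ : ℕ∞) := by
  apply le_antisymm
  · have hc := (HoppingEmpty.ceil_le_iff n _).1 le_rfl
    have hmin : ∀ k, 4 * n ≤ (k + 1) ^ 2 → ⌈2 * Real.sqrt (n : ℝ) - 1⌉₊ ≤ k :=
      fun k => (HoppingEmpty.ceil_le_iff n k).2
    generalize ⌈2 * Real.sqrt (n : ℝ) - 1⌉₊ = c at hc hmin ⊢
    obtain ⟨b, t, hbt, hnb, hbn⟩ : ∃ b t, b + t = c ∧ n ≤ b * (t + 1) ∧ b ≤ n := by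
      refine ⟨(c + 1) / 2, c - (c + 1) / 2, by omega, ?_, ?_⟩
      · obtain ⟨k, rfl | rfl⟩ := Nat.even_or_odd' c
        · rw [show (2 * k + 1) / 2 = k by omega, show 2 * k - k = k by omega]
          nlinarith
        · rw [show (2 * k + 1 + 1) / 2 = k + 1 by omega,
            show 2 * k + 1 - (k + 1) = k by omega]
          nlinarith
      · -- Minimality of `c` gives `c ≤ 2 * n - 1`, as `4 * n ≤ (2 * n) ^ 2`.
        have := hmin (2 * n - 1) (by
          rw [Nat.sub_add_cancel (by omega)]
          nlinarith)
        omega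
    obtain ⟨B, -, hB⟩ := Finset.exists_subset_card_eq
      (s := (Finset.univ : Finset (Fin n))) (n := b) (by simpa using hbn)
    obtain ⟨T, hT, hTc⟩ := HoppingEmpty.exists_reach_card (b := b) t (B, ∅)
      (Finset.empty_subset _) (by simpa using hB)
    have hT1 : T.1 = Finset.univ := by
      rw [← Finset.card_eq_iff_eq_univ]
      have := Finset.card_le_univ T.1
      simp only [hB, Fintype.card_fin] at hTc this ⊢
      have : b * (t + 1) = b + t * b := by ring
      omega
    refine iInf_le_of_le B ?_
    have hp : Hopping.propTime (⊥ : SimpleGraph (Fin n)) B ≤ (t : ℕ∞) :=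
      sInf_le ⟨t, rfl, T, hT, hT1⟩
    rw [← hbt, hB, Nat.cast_add]
    gcongr
  · refine le_iInf fun B => ?_
    by_cases hne : {t : ℕ∞ | ∃ t' : ℕ, t = (t' : ℕ∞) ∧ ∃ T,
        Hopping.Reach (⊥ : SimpleGraph (Fin n)) t' (B, ∅) T ∧ T.1 = Finset.univ}.Nonempty
    · obtain ⟨t, ht, T, hT, hT1⟩ := csInf_mem hne
      change Hopping.propTime _ B = _ at ht
      rw [ht]
      have h := HoppingEmpty.reach_card_le (b := B.card) t hT (Finset.empty_subset _) (by simp)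
      rw [hT1, Finset.card_univ, Fintype.card_fin] at h
      have : ⌈2 * Real.sqrt (n : ℝ) - 1⌉₊ ≤ B.card + t := by
        rw [HoppingEmpty.ceil_le_iff]
        simp only at h
        -- AM-GM for `B.card` and `t + 1`.
        zify at h ⊢
        nlinarith [sq_nonneg ((B.card : ℤ) - (t + 1))]
      exact_mod_cast this
    · rw [Hopping.propTime, Set.not_nonempty_iff_eq_empty.1 hne]
      simp
end

section
/- For every integer n ≥ 2, the path graph P_n on n vertices has hopping throttling number th_H(P_n) = ⌈2·√(n − 1)⌉. -/
namespace Hopping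

section LowerBound

variable {V : Type*}

/-- A nonempty proper vertex set of a connected graph has an edge leaving it. -/
lemma exists_boundary {G : SimpleGraph V} (hG : G.Connected) (s : Finset V) {a c : V}
    (ha : a ∈ s) (hc : c ∉ s) : ∃ v ∈ s, ∃ w, G.Adj v w ∧ w ∉ s := by
  by_contra! h
  refine hc ?_
  obtain ⟨p⟩ := hG.preconnected a c
  clear hc
  induction p with
  | nil => exact ha
  | cons hadj _ ih => exact ih (h _ ha _ hadj)

variable [DecidableEq V]

/-- The properties of a state preserved by rounds started from `b` blue vertices: used vertices are
blue and have only blue neighbors, and exactly `b` blue vertices are unused. -/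
structure Inv_s12 (G : SimpleGraph V) (b : ℕ) (S : Finset V × Finset V) : Prop where
  used_subset : S.2 ⊆ S.1
  nbr_blue : ∀ v ∈ S.2, ∀ w, G.Adj v w → w ∈ S.1
  card_eq : S.1.card = S.2.card + b

/-- A round keeps the invariant and adds at most `b - 1` blue vertices, since a blue vertex with a
white neighbor is unused and idle. -/
lemma round_step {G : SimpleGraph V} (hG : G.Connected) {c : ℕ} {S T : Finset V × Finset V}
    (hS : Inv_s12 G (c + 1) S) (h : Round G S T) :
    Inv_s12 G (c + 1) T ∧ T.1.card ≤ S.1.card + c := by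
  obtain ⟨F, hF, hinj, hT1, hT2⟩ := h
  have hc1 : (F.image Prod.fst).card = F.card := by
    refine Finset.card_image_of_injOn fun p hp q hq hpq => ?_
    by_contra hne
    exact (hinj p hp q hq hne).1 hpq
  have hc2 : (F.image Prod.snd).card = F.card := by
    refine Finset.card_image_of_injOn fun p hp q hq hpq => ?_
    by_contra hne
    exact (hinj p hp q hq hne).2 hpq
  have hd1 : Disjoint S.2 (F.image Prod.fst) := by
    rw [Finset.disjoint_right]
    intro v hv
    obtain ⟨p, hp, rfl⟩ := Finset.mem_image.1 hv
    exact (hF p hp).2.1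
  have hd2 : Disjoint S.1 (F.image Prod.snd) := by
    rw [Finset.disjoint_right]
    intro v hv
    obtain ⟨p, hp, rfl⟩ := Finset.mem_image.1 hv
    exact (hF p hp).2.2.2
  have hT1c : T.1.card = S.1.card + F.card := by
    rw [hT1, Finset.card_union_of_disjoint hd2, hc2]
  have hT2c : T.2.card = S.2.card + F.card := by
    rw [hT2, Finset.card_union_of_disjoint hd1, hc1]
  have hsub : S.1 ⊆ T.1 := hT1 ▸ Finset.subset_union_left
  refine ⟨⟨?_, ?_, ?_⟩, ?_⟩
  · rw [hT2]
    refine Finset.union_subset (hS.used_subset.trans hsub) fun v hv => ?_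
    obtain ⟨p, hp, rfl⟩ := Finset.mem_image.1 hv
    exact hsub (hF p hp).1
  · intro v hv w hw
    rw [hT2, Finset.mem_union] at hv
    rcases hv with hv | hv
    · exact hsub (hS.nbr_blue v hv w hw)
    · obtain ⟨p, hp, rfl⟩ := Finset.mem_image.1 hv
      exact hsub ((hF p hp).2.2.1 w hw)
  · have := hS.card_eq
    omega
  · suffices F.card ≤ c by omega
    rcases F.eq_empty_or_nonempty with rfl | ⟨p, hp⟩
    · simp
    obtain ⟨v, hv, w, hvw, hw⟩ := exists_boundary hG S.1 (hF p hp).1 (hF p hp).2.2.2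
    have hvu : v ∉ S.2 := fun hv2 => hw (hS.nbr_blue v hv2 w hvw)
    have hle : F.image Prod.fst ⊆ (S.1 \ S.2).erase v := by
      intro u hu
      obtain ⟨q, hq, rfl⟩ := Finset.mem_image.1 hu
      obtain ⟨h1, h2, h3, -⟩ := hF q hq
      refine Finset.mem_erase.2 ⟨?_, Finset.mem_sdiff.2 ⟨h1, h2⟩⟩
      rintro rfl
      exact hw (h3 w hvw)
    have h1 := Finset.card_le_card hle
    rw [hc1, Finset.card_erase_of_mem (Finset.mem_sdiff.2 ⟨hv, hvu⟩),
      Finset.card_sdiff_of_subset hS.used_subset] at h1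
    have := hS.card_eq
    omega

lemma card_le_of_reach {G : SimpleGraph V} (hG : G.Connected) {c : ℕ} (t : ℕ)
    {S T : Finset V × Finset V} (hS : Inv_s12 G (c + 1) S) (h : Reach G t S T) :
    T.1.card ≤ S.1.card + t * c := by
  induction t generalizing S with
  | zero => cases h; simp
  | succ t ih =>
    obtain ⟨U, hU, hR⟩ := h
    obtain ⟨hI, hle⟩ := round_step hG hS hU
    have := ih hI hR
    rw [Nat.succ_mul]
    omega

/-- No force is possible when no vertex is blue. -/
lemma reach_empty {G : SimpleGraph V} (t : ℕ) {S T : Finset V × Finset V} (hS : S.1 = ∅)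
    (h : Reach G t S T) : T.1 = ∅ := by
  induction t generalizing S with
  | zero => cases h; exact hS
  | succ t ih =>
    obtain ⟨U, ⟨F, hF, -, hU, -⟩, hR⟩ := h
    refine ih ?_ hR
    have : F = ∅ := Finset.eq_empty_of_forall_notMem fun p hp => by
      have := (hF p hp).1
      simp [hS] at this
    simp [hU, hS, this]

/-- If `B` colors a connected graph in `t` rounds, then `4 (n - 1) ≤ (|B| + t) ^ 2`. -/
lemma four_mul_card_le [Fintype V] {G : SimpleGraph V} (hG : G.Connected) {B : Finset V} {t : ℕ}
    {T : Finset V × Finset V} (h : Reach G t (B, ∅) T) (hT : T.1 = Finset.univ) :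
    4 * Fintype.card V ≤ (B.card + t) ^ 2 + 4 := by
  obtain hB | ⟨c, hc⟩ : B.card = 0 ∨ ∃ c, B.card = c + 1 := by
    cases B.card <;> simp
  · have := reach_empty t (Finset.card_eq_zero.1 hB) h
    rw [hT] at this
    rw [← Finset.card_univ, this]
    simp
  · have hI : Inv_s12 G (c + 1) (B, ∅) := ⟨by simp, by simp, by simpa using hc⟩
    have h1 := card_le_of_reach hG t hI h
    rw [hT, Finset.card_univ] at h1
    simp only [hc] at h1 ⊢
    -- The gap is `((b - 1) - (t + 1)) ^ 2`, where `b - 1 = c`.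
    zify at h1 ⊢
    nlinarith [sq_nonneg ((c : ℤ) - (t + 1))]

end LowerBound

section UpperBound

/-- The state of the path after `k` rounds started from the first `c + 1` vertices, when every
vertex `i` forces `i + c + 1` (if that vertex exists) and `c` of them act per round. -/
def segState (n c k : ℕ) : Finset (Fin n) × Finset (Fin n) :=
  (Finset.univ.filter fun i => i.val < c + 1 + k * c,
    Finset.univ.filter fun i => i.val < k * c ∧ i.val + (c + 1) < n)

lemma segState_round (n c k : ℕ) :
    Round (SimpleGraph.pathGraph n) (segState n c k) (segState n c (k + 1)) := by
  have hk : (k + 1) * c = k * c + c := Nat.succ_mul k c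
  refine ⟨Finset.univ.filter fun p : Fin n × Fin n =>
    p.2.val = p.1.val + (c + 1) ∧ k * c ≤ p.1.val ∧ p.1.val < k * c + c, ?_, ?_, ?_, ?_⟩
  · rintro ⟨v, w⟩ hp
    simp only [Finset.mem_filter, Finset.mem_univ, true_and] at hp
    simp only [segState, Finset.mem_filter, Finset.mem_univ, true_and,
      SimpleGraph.pathGraph_adj]
    refine ⟨by omega, by omega, fun u hu => by omega, by omega⟩
  · rintro ⟨v, w⟩ hp ⟨v', w'⟩ hq hne
    simp only [Finset.mem_filter, Finset.mem_univ, true_and] at hp hq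
    simp only [ne_eq, Prod.mk.injEq, Fin.ext_iff] at hne ⊢
    omega
  · ext i
    simp only [segState, hk, Finset.mem_union, Finset.mem_filter, Finset.mem_univ, true_and,
      Finset.mem_image, Prod.exists, exists_eq_right]
    constructor
    · intro h
      by_cases h' : i.val < c + 1 + k * c
      · exact Or.inl h'
      · exact Or.inr ⟨⟨i.val - (c + 1), by omega⟩, by simp only; omega⟩
    · rintro (h | ⟨v, h⟩) <;> omega
  · ext i
    simp only [segState, hk, Finset.mem_union, Finset.mem_filter, Finset.mem_univ, true_and,
      Finset.mem_image, Prod.exists, exists_and_right, exists_eq_right]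
    constructor
    · rintro ⟨h1, h2⟩
      by_cases h' : i.val < k * c
      · exact Or.inl ⟨h', h2⟩
      · exact Or.inr ⟨⟨⟨i.val + (c + 1), h2⟩, rfl⟩, by omega⟩
    · rintro (h | ⟨⟨v, h⟩, h'⟩) <;> omega

lemma segState_reach (n c k t : ℕ) :
    Reach (SimpleGraph.pathGraph n) t (segState n c k) (segState n c (k + t)) := by
  induction t generalizing k with
  | zero => rfl
  | succ t ih =>
    refine ⟨_, segState_round n c k, ?_⟩
    have := ih (k + 1)
    rwa [show k + 1 + t = k + (t + 1) by omega] at this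

lemma throttling_pathGraph_le (n c t : ℕ) (h : n ≤ c + 1 + t * c) :
    throttling (SimpleGraph.pathGraph n) ≤ ((c + 1 + t : ℕ) : ℕ∞) := by
  have h0 : segState n c 0 = ((segState n c 0).1, ∅) := by
    simp [segState]
  have hcard : (segState n c 0).1.card ≤ c + 1 := by
    have := Finset.card_le_card_of_injOn (s := (segState n c 0).1) (t := Finset.range (c + 1))
      Fin.val (fun i hi => by simpa [segState] using hi) Fin.val_injective.injOn
    simpa using this
  have hp : propTime (SimpleGraph.pathGraph n) (segState n c 0).1 ≤ (t : ℕ∞) := by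
    refine sInf_le ⟨t, rfl, segState n c (0 + t), h0 ▸ segState_reach n c 0 t, ?_⟩
    ext i
    have := i.isLt
    simp only [segState, zero_add, Finset.mem_filter, Finset.mem_univ, true_and, iff_true]
    omega
  refine (iInf_le _ (segState n c 0).1).trans ?_
  push_cast
  exact add_le_add (by exact_mod_cast hcard) hp

end UpperBound

lemma ceil_two_sqrt_le_iff (n m : ℕ) :
    ⌈2 * Real.sqrt ((n : ℝ) - 1)⌉₊ ≤ m ↔ 4 * n ≤ m ^ 2 + 4 := by
  have h4 : 2 * Real.sqrt ((n : ℝ) - 1) = Real.sqrt (4 * ((n : ℝ) - 1)) := by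
    rw [Real.sqrt_mul (by norm_num), show (4 : ℝ) = 2 ^ 2 by norm_num,
      Real.sqrt_sq (by norm_num)]
  rw [Nat.ceil_le, h4, Real.sqrt_le_left (Nat.cast_nonneg m)]
  rw [← Nat.cast_le (α := ℝ)]
  push_cast
  constructor <;> intro h <;> linarith

end Hopping

/-- For every `n ≥ 2`, the path graph `P_n` has hopping throttling number
`⌈2√(n-1)⌉`. -/
theorem hoppingThrottling_pathGraph (n : ℕ) (hn : 2 ≤ n) :
    Hopping.throttling (SimpleGraph.pathGraph n) =
      (⌈2 * Real.sqrt ((n : ℝ) - 1)⌉₊ : ℕ∞) := by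
  set m := ⌈2 * Real.sqrt ((n : ℝ) - 1)⌉₊ with hm
  have hiff := Hopping.ceil_two_sqrt_le_iff n
  apply le_antisymm
  · have hle : 4 * n ≤ m ^ 2 + 4 := (hiff m).1 le_rfl
    have hm2 : 2 ≤ m := by nlinarith
    -- Balanced choice: `c = b - 1` and `t + 1` are the two halves of `m`.
    obtain ⟨c, t, hct, hb⟩ : ∃ c t, c + 1 + t = m ∧ (c = t ∨ c = t + 1) :=
      ⟨m / 2, m - 1 - m / 2, by omega, by omega⟩
    rw [← hct] at hle ⊢
    refine Hopping.throttling_pathGraph_le n c t ?_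
    rcases hb with rfl | rfl <;> ring_nf at hle ⊢ <;> omega
  · refine le_iInf fun B => ?_
    have : Nonempty (Fin n) := ⟨⟨0, by omega⟩⟩
    have hconn : (SimpleGraph.pathGraph n).Connected := by
      obtain ⟨k, rfl⟩ : ∃ k, n = k + 1 := ⟨n - 1, by omega⟩
      exact SimpleGraph.pathGraph_connected k
    by_cases htop : Hopping.propTime (SimpleGraph.pathGraph n) B = ⊤
    · simp [htop]
    have hne : {t : ℕ∞ | ∃ t' : ℕ, t = (t' : ℕ∞) ∧ ∃ T,
        Hopping.Reach (SimpleGraph.pathGraph n) t' (B, ∅) T ∧ T.1 = Finset.univ}.Nonempty := by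
      by_contra hemp
      rw [Set.not_nonempty_iff_eq_empty] at hemp
      exact htop (by rw [Hopping.propTime, hemp, sInf_empty])
    -- The infimum defining the propagation time is attained.
    obtain ⟨t, ht, T, hR, hT⟩ := csInf_mem hne
    have h4 := Hopping.four_mul_card_le hconn hR hT
    rw [Fintype.card_fin] at h4
    rw [Hopping.propTime, ht]
    have hfin : m ≤ B.card + t := (hiff _).2 h4
    exact_mod_cast hfin
end

section
/- For every integer n ≥ 3, the cycle graph C_n on n vertices has hopping throttling number th_H(C_n) = ⌈2·√(n − 2) + 1⌉. -/
namespace Hopping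

open SimpleGraph

/-- If no edge of a cycle that avoids the vertex `b` joins a blue vertex to a white one, then all
vertices other than `b` have the same color: deleting `b` leaves a path. -/
lemma mem_iff_of_ne {m : ℕ} (S : Finset (Fin (m + 2))) (b : Fin (m + 2))
    (h : ∀ x y, x ≠ b → y ≠ b → (cycleGraph (m + 2)).Adj x y → x ∈ S → y ∈ S) :
    ∀ x, x ≠ b → (x ∈ S ↔ b + 1 ∈ S) := by
  -- Induction on `d`, where `d + 1` is the distance from `b` to `x` in the positive direction.
  have key : ∀ d : ℕ, ∀ x : Fin (m + 2), (x - b).val = d + 1 → (x ∈ S ↔ b + 1 ∈ S) := by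
    intro d
    induction d with
    | zero =>
      intro x hx
      have h1 : x - b = 1 := by
        apply Fin.ext
        rw [hx]
        simp
      have : x = b + 1 := by rw [← h1]; abel
      rw [this]
    | succ d ih =>
      intro x hx
      have hxb : x - b ≠ 0 := by
        intro h0
        rw [h0] at hx
        simp at hx
      have hv : (x - 1 - b).val = d + 1 := by
        have h2 : x - 1 - b = x - b - 1 := by abel
        rw [h2, Fin.val_sub_one_of_ne_zero hxb, hx]
        omega
      have hne : x ≠ b := fun h0 => hxb (by rw [h0, sub_self])
      have hne' : x - 1 ≠ b := by
        intro h0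
        rw [h0, sub_self] at hv
        simp at hv
      rw [← ih (x - 1) hv]
      have hadj : (cycleGraph (m + 2)).Adj x (x - 1) := by
        rw [cycleGraph_adj]
        left
        abel
      exact ⟨h _ _ hne hne' hadj, h _ _ hne' hne hadj.symm⟩
  intro x hx
  have h0 : (x - b).val ≠ 0 := by
    intro h0
    exact hx (sub_eq_zero.mp (Fin.ext h0))
  exact key ((x - b).val - 1) x (by omega)

open Classical in
/-- The blue vertices of a cycle that have a white neighbor, where `S` is the set of blue
vertices. -/
noncomputable def boundary {m : ℕ} (S : Finset (Fin (m + 2))) : Finset (Fin (m + 2)) :=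
  {x ∈ S | ∃ y, (cycleGraph (m + 2)).Adj x y ∧ y ∉ S}

lemma two_le_card_boundary {m : ℕ} (S : Finset (Fin (m + 2))) (v w : Fin (m + 2))
    (hv : v ∈ S) (hvn : ∀ y, (cycleGraph (m + 2)).Adj v y → y ∈ S) (hw : w ∉ S) :
    2 ≤ (boundary S).card := by
  by_contra hlt
  obtain ⟨b, hb⟩ := Finset.card_le_one_iff_subset_singleton.mp
    (show (boundary S).card ≤ 1 by omega)
  have hclosed : ∀ x y, x ≠ b → (cycleGraph (m + 2)).Adj x y → x ∈ S → y ∈ S := by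
    intro x y hx hxy hxS
    by_contra hy
    have : x ∈ boundary S := Finset.mem_filter.mpr ⟨hxS, y, hxy, hy⟩
    exact hx (Finset.mem_singleton.mp (hb this))
  have hiff := mem_iff_of_ne S b fun x y hx _ => hclosed x y hx
  have hadj : (cycleGraph (m + 2)).Adj b (b + 1) := by
    rw [cycleGraph_adj]
    right
    abel
  have hb1 : b + 1 ∈ S := by
    by_cases hvb : v = b
    · exact hvn _ (hvb ▸ hadj)
    · exact (hiff v hvb).mp hv
  by_cases hwb : w = b
  · exact hw (hwb ▸ hclosed _ _ hadj.ne' hadj.symm hb1)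
  · exact hw ((hiff w hwb).mpr hb1)

/-- The properties of a state `(blue, used)` that are preserved by a round and used in the lower
bound: used vertices are blue, so are their neighbors, and exactly `k` blue vertices are unused. -/
structure Inv_s13 {V : Type*} (G : SimpleGraph V) (k : ℕ) (S : Finset V × Finset V) : Prop where
  subset : S.2 ⊆ S.1
  closed : ∀ v ∈ S.2, ∀ w, G.Adj v w → w ∈ S.1
  card : S.1.card = k + S.2.card

/-- A round preserves the invariant and colors at most `k - 2` vertices, because at least two of the
`k` unused blue vertices lie on the boundary.  If no force is made, truncation of `k - 2` is
harmless. -/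
lemma Round.inv {m k : ℕ} {S T : Finset (Fin (m + 2)) × Finset (Fin (m + 2))}
    (hS : Inv_s13 (cycleGraph (m + 2)) k S) (h : Round (cycleGraph (m + 2)) S T) :
    Inv_s13 (cycleGraph (m + 2)) k T ∧ T.1.card ≤ S.1.card + (k - 2) := by
  obtain ⟨F, hF, hinj, h1, h2⟩ := h
  have c1 : (F.image Prod.fst).card = F.card := Finset.card_image_of_injOn fun p hp q hq hpq => by
    by_contra hne
    exact (hinj p hp q hq hne).1 hpq
  have c2 : (F.image Prod.snd).card = F.card := Finset.card_image_of_injOn fun p hp q hq hpq => by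
    by_contra hne
    exact (hinj p hp q hq hne).2 hpq
  have d1 : Disjoint S.1 (F.image Prod.snd) := by
    rw [Finset.disjoint_right]
    intro w hw
    obtain ⟨p, hp, rfl⟩ := Finset.mem_image.mp hw
    exact (hF p hp).2.2.2
  have d2 : Disjoint S.2 (F.image Prod.fst) := by
    rw [Finset.disjoint_right]
    intro w hw
    obtain ⟨p, hp, rfl⟩ := Finset.mem_image.mp hw
    exact (hF p hp).2.1
  have e1 : T.1.card = S.1.card + F.card := by
    rw [h1, Finset.card_union_of_disjoint d1, c2]
  have e2 : T.2.card = S.2.card + F.card := by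
    rw [h2, Finset.card_union_of_disjoint d2, c1]
  have hST : S.1 ⊆ T.1 := h1 ▸ Finset.subset_union_left
  refine ⟨⟨?_, ?_, ?_⟩, ?_⟩
  · rw [h2]
    refine Finset.union_subset (hS.subset.trans hST) ?_
    intro v hv
    obtain ⟨p, hp, rfl⟩ := Finset.mem_image.mp hv
    exact hST (hF p hp).1
  · intro v hv w hvw
    rw [h2, Finset.mem_union] at hv
    rcases hv with hv | hv
    · exact hST (hS.closed v hv w hvw)
    · obtain ⟨p, hp, rfl⟩ := Finset.mem_image.mp hv
      exact hST ((hF p hp).2.2.1 w hvw)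
  · have := hS.card
    omega
  · rcases F.eq_empty_or_nonempty with rfl | ⟨p, hp⟩
    · rw [e1]
      simp
    · obtain ⟨hp1, -, hp3, hp4⟩ := hF p hp
      have hbd := two_le_card_boundary S.1 p.1 p.2 hp1 hp3 hp4
      -- Used vertices, boundary vertices and forcing vertices are pairwise disjoint sets of
      -- blue vertices.
      have d3 : Disjoint T.2 (boundary S.1) := by
        rw [Finset.disjoint_left]
        intro v hv hvb
        obtain ⟨-, y, hvy, hy⟩ := Finset.mem_filter.mp hvb
        rw [h2, Finset.mem_union] at hv
        rcases hv with hv | hv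
        · exact hy (hS.closed v hv y hvy)
        · obtain ⟨q, hq, rfl⟩ := Finset.mem_image.mp hv
          exact hy ((hF q hq).2.2.1 y hvy)
      have hsub : T.2 ∪ boundary S.1 ⊆ S.1 := by
        refine Finset.union_subset ?_ (Finset.filter_subset _ _)
        rw [h2]
        refine Finset.union_subset hS.subset ?_
        intro v hv
        obtain ⟨q, hq, rfl⟩ := Finset.mem_image.mp hv
        exact (hF q hq).1
      have hle := Finset.card_le_card hsub
      rw [Finset.card_union_of_disjoint d3] at hle
      have := hS.card
      omega

lemma Reach.card_le_s13 {m k t : ℕ} {S T : Finset (Fin (m + 2)) × Finset (Fin (m + 2))}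
    (hS : Inv_s13 (cycleGraph (m + 2)) k S) (h : Reach (cycleGraph (m + 2)) t S T) :
    T.1.card ≤ S.1.card + t * (k - 2) := by
  induction t generalizing S with
  | zero =>
    obtain rfl : S = T := h
    simp
  | succ t ih =>
    obtain ⟨U, hU, hUT⟩ := h
    obtain ⟨hi, hc⟩ := hU.inv hS
    have := ih hi hUT
    rw [Nat.succ_mul]
    omega

lemma bound_of_reach {m t : ℕ} (hm : 1 ≤ m) (B : Finset (Fin (m + 2)))
    {T : Finset (Fin (m + 2)) × Finset (Fin (m + 2))}
    (h : Reach (cycleGraph (m + 2)) t (B, ∅) T) (hT : T.1 = Finset.univ) :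
    ∃ a, B.card = a + 2 ∧ m ≤ a * (t + 1) := by
  have hle := Reach.card_le_s13 (k := B.card) ⟨by simp, by simp, by simp⟩ h
  rw [hT, Finset.card_univ, Fintype.card_fin] at hle
  have h2 : 2 ≤ B.card := by
    by_contra hlt
    have h0 : B.card - 2 = 0 := by omega
    rw [h0] at hle
    simp only [mul_zero, add_zero] at hle
    omega
  obtain ⟨a, ha⟩ := Nat.exists_eq_add_of_le' h2
  refine ⟨a, ha, ?_⟩
  rw [ha, Nat.add_sub_cancel] at hle
  nlinarith

/-- The state after `i` rounds of the strategy in which every unused interior vertex `v` of the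
blue arc forces `v + a + 1`: blue is the arc of the first `a + 2 + i a` vertices (all vertices if
there are fewer), and used are the vertices `1, …, i a` for which `v + a + 1` exists. -/
def arcState (m a i : ℕ) : Finset (Fin (m + 2)) × Finset (Fin (m + 2)) :=
  (({x : Fin (m + 2) | x.val < a + 2 + i * a} : Finset _),
    ({x : Fin (m + 2) | 1 ≤ x.val ∧ x.val ≤ i * a ∧ x.val + a + 1 < m + 2} : Finset _))

lemma round_arcState {m a : ℕ} (ha : 1 ≤ a) (i : ℕ) :
    Round (cycleGraph (m + 2)) (arcState m a i) (arcState m a (i + 1)) := by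
  refine ⟨({p | i * a + 1 ≤ p.1.val ∧ p.1.val ≤ (i + 1) * a ∧ p.2.val = p.1.val + a + 1} :
    Finset (Fin (m + 2) × Fin (m + 2))), ?_, ?_, ?_, ?_⟩
  · rintro ⟨v, w⟩ hp
    simp only [arcState, Finset.mem_filter, Finset.mem_univ, true_and, add_mul, one_mul] at hp ⊢
    have hw := w.isLt
    refine ⟨by omega, by omega, ?_, by omega⟩
    intro y hy
    rw [cycleGraph_adj] at hy
    rcases hy with hy | hy
    · have e : v = y + 1 := by rw [← hy]; abel
      have e' := congrArg Fin.val e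
      rw [Fin.val_add_one] at e'
      split_ifs at e' <;> omega
    · have e : y = v + 1 := by rw [← hy]; abel
      have e' := congrArg Fin.val e
      rw [Fin.val_add_one] at e'
      split_ifs at e' <;> omega
  · rintro ⟨v, w⟩ hp ⟨v', w'⟩ hq hne
    simp only [Finset.mem_filter, Finset.mem_univ, true_and] at hp hq ⊢
    have hiff : v = v' ↔ w = w' := by
      rw [Fin.ext_iff, Fin.ext_iff]
      omega
    rw [Ne, Prod.mk.injEq] at hne
    tauto
  · ext w
    simp only [arcState, Finset.mem_filter, Finset.mem_univ, true_and, Finset.mem_union,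
      Finset.mem_image, Prod.exists, exists_eq_right, add_mul, one_mul]
    have hw := w.isLt
    constructor
    · intro h
      by_cases h' : w.val < a + 2 + i * a
      · exact Or.inl h'
      · exact Or.inr ⟨⟨w.val - a - 1, by omega⟩, by dsimp only; omega⟩
    · rintro (h | ⟨v, hv⟩) <;> omega
  · ext v
    simp only [arcState, Finset.mem_filter, Finset.mem_univ, true_and, Finset.mem_union,
      Finset.mem_image, Prod.exists, exists_and_right, exists_eq_right, add_mul, one_mul]
    constructor
    · intro h
      by_cases h' : v.val ≤ i * a
      · exact Or.inl (by omega)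
      · exact Or.inr ⟨⟨v.val + a + 1, by omega⟩, by dsimp only; omega⟩
    · rintro (h | ⟨w, hw⟩)
      · omega
      · have := w.isLt
        omega

lemma reach_arcState {m a : ℕ} (ha : 1 ≤ a) (t i : ℕ) :
    Reach (cycleGraph (m + 2)) t (arcState m a i) (arcState m a (i + t)) := by
  induction t generalizing i with
  | zero => rfl
  | succ t ih =>
    refine ⟨_, round_arcState ha i, ?_⟩
    rw [show i + (t + 1) = i + 1 + t by omega]
    exact ih (i + 1)

lemma throttling_le {m a t : ℕ} (ha : 1 ≤ a) (h : m ≤ a * (t + 1)) :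
    throttling (cycleGraph (m + 2)) ≤ ((a + 2 + t : ℕ) : ℕ∞) := by
  have hR := reach_arcState (m := m) ha t 0
  have h0 : arcState m a 0 = ((arcState m a 0).1, ∅) := by
    refine Prod.ext rfl ?_
    ext x
    simp only [arcState, Finset.mem_filter, Finset.mem_univ, true_and, Finset.notMem_empty,
      iff_false]
    omega
  have hcard : (arcState m a 0).1.card ≤ a + 2 := by
    calc (arcState m a 0).1.card = ((arcState m a 0).1.map Fin.valEmbedding).card :=
          (Finset.card_map _).symm
      _ ≤ (Finset.range (a + 2)).card := by
          refine Finset.card_le_card fun x hx => ?_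
          obtain ⟨y, hy, rfl⟩ := Finset.mem_map.mp hx
          simpa [arcState] using hy
      _ = a + 2 := Finset.card_range _
  have huniv : (arcState m a (0 + t)).1 = Finset.univ := by
    ext x
    simp only [arcState, Finset.mem_filter, Finset.mem_univ, true_and, iff_true, zero_add]
    have := x.isLt
    nlinarith
  rw [h0] at hR
  refine iInf_le_of_le (arcState m a 0).1 ?_
  rw [Nat.cast_add]
  exact add_le_add (by exact_mod_cast hcard) (sInf_le ⟨t, rfl, _, hR, huniv⟩)

lemma le_throttling {m c : ℕ} (hm : 1 ≤ m) (hc : ∀ a t : ℕ, m ≤ a * (t + 1) → c ≤ a + 2 + t) :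
    (c : ℕ∞) ≤ throttling (cycleGraph (m + 2)) := by
  refine le_iInf fun B => ?_
  unfold propTime
  rcases Set.eq_empty_or_nonempty {t : ℕ∞ | ∃ t' : ℕ, t = (t' : ℕ∞) ∧
    ∃ T, Reach (cycleGraph (m + 2)) t' (B, ∅) T ∧ T.1 = Finset.univ} with he | hne
  · rw [he, sInf_empty]
    simp
  · obtain ⟨t, ht, T, hT, hu⟩ := csInf_mem hne
    rw [ht]
    obtain ⟨a, ha, hle⟩ := bound_of_reach hm B hT hu
    rw [ha]
    exact_mod_cast hc a t hle

/-- AM-GM, in the form needed for the lower bound. -/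
lemma ceil_le_of_le_mul {m a b : ℕ} (h : m ≤ a * b) :
    ⌈2 * √(m : ℝ) + 1⌉₊ ≤ a + b + 1 := by
  refine Nat.ceil_le.mpr ?_
  push_cast
  have h' : (m : ℝ) ≤ a * b := by exact_mod_cast h
  have hs : √(m : ℝ) ≤ ((a : ℝ) + b) / 2 := by
    refine Real.sqrt_le_iff.mpr ⟨by positivity, ?_⟩
    nlinarith [sq_nonneg ((a : ℝ) - b)]
  linarith

/-- The bound of `ceil_le_of_le_mul` is attained, by two factors that differ by at most one. -/
lemma exists_mul_of_ceil {m : ℕ} (hm : 1 ≤ m) :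
    ∃ a t : ℕ, 1 ≤ a ∧ m ≤ a * (t + 1) ∧ a + 2 + t ≤ ⌈2 * √(m : ℝ) + 1⌉₊ := by
  obtain ⟨s, hs⟩ : ∃ s, ⌈2 * √(m : ℝ) + 1⌉₊ = s + 1 :=
    ⟨⌈2 * √(m : ℝ)⌉₊, Nat.ceil_add_one (by positivity)⟩
  have hle := Nat.le_ceil (2 * √(m : ℝ) + 1)
  rw [hs] at hle ⊢
  push_cast at hle
  have hsq : 4 * m ≤ s * s := by
    have h1 := Real.sq_sqrt (Nat.cast_nonneg (α := ℝ) m)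
    have h2 := Real.sqrt_nonneg (m : ℝ)
    have : (4 * m : ℝ) ≤ s * s := by nlinarith
    exact_mod_cast this
  have hs2 : 2 ≤ s := by nlinarith
  rcases Nat.even_or_odd' s with ⟨r, rfl | rfl⟩
  · obtain ⟨q, rfl⟩ : ∃ q, r = q + 1 := ⟨r - 1, by omega⟩
    exact ⟨q + 1, q, by omega, by nlinarith, by omega⟩
  · refine ⟨r, r, by omega, ?_, by omega⟩
    -- `4 m ≤ (2 r + 1) ^ 2 = 4 r (r + 1) + 1`, and the left side is divisible by `4`.
    have : (2 * r + 1) * (2 * r + 1) = 4 * (r * (r + 1)) + 1 := by ring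
    omega

end Hopping

/-- For every `n ≥ 3`, the cycle graph `C_n` has hopping throttling number
`⌈2√(n-2) + 1⌉`. -/
theorem hoppingThrottling_cycleGraph (n : ℕ) (hn : 3 ≤ n) :
    Hopping.throttling (SimpleGraph.cycleGraph n) =
      (⌈2 * Real.sqrt ((n : ℝ) - 2) + 1⌉₊ : ℕ∞) := by
  obtain ⟨m, rfl⟩ : ∃ m, n = m + 2 := ⟨n - 2, by omega⟩
  have hm : 1 ≤ m := by omega
  have hcast : ((m + 2 : ℕ) : ℝ) - 2 = m := by push_cast; ring
  rw [hcast]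
  apply le_antisymm
  · obtain ⟨a, t, ha, hle, hc⟩ := Hopping.exists_mul_of_ceil hm
    exact (Hopping.throttling_le ha hle).trans (by exact_mod_cast hc)
  · refine Hopping.le_throttling hm fun a t h => ?_
    have := Hopping.ceil_le_of_le_mul h
    omega
end

section
/- If G is a finite simple graph on n vertices with independence number α, then th_H(G) ≤ ⌈n − α + 2·√α − 1⌉. -/
namespace Hopping

/-- The independence number of `G`: the maximum size of a set of pairwise
non-adjacent vertices. -/
noncomputable def indepNumber {V : Type*} [Fintype V] (G : SimpleGraph V) : ℕ :=
  sSup {k | ∃ S : Finset V, S.card = k ∧ ∀ u ∈ S, ∀ v ∈ S, u ≠ v → ¬ G.Adj u v}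

end Hopping

namespace Hopping

/-- If `Q` is a set of blue vertices with blue neighborhoods, none of which has forced yet, then `Q`
can force any equinumerous set `W` of white vertices in one round. -/
lemma round_of_card_eq {V : Type*} [DecidableEq V] (G : SimpleGraph V) {S U Q W : Finset V}
    (hQS : Q ⊆ S) (hQU : Disjoint Q U) (hQ : ∀ v ∈ Q, ∀ w, G.Adj v w → w ∈ S)
    (hW : Disjoint W S) (hcard : Q.card = W.card) :
    Round G (S, U) (S ∪ W, U ∪ Q) := by
  let e : Q ≃ W := Finset.equivOfCardEq hcard
  refine ⟨Finset.univ.image fun q : Q => (q.1, (e q).1), ?_, ?_, ?_, ?_⟩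
  · intro p hp
    obtain ⟨q, -, rfl⟩ := Finset.mem_image.1 hp
    exact ⟨hQS q.2, Finset.disjoint_left.1 hQU q.2, hQ _ q.2,
      Finset.disjoint_left.1 hW (e q).2⟩
  · intro p hp p' hp' hne
    obtain ⟨q, -, rfl⟩ := Finset.mem_image.1 hp
    obtain ⟨q', -, rfl⟩ := Finset.mem_image.1 hp'
    have hqq : q ≠ q' := by
      rintro rfl
      exact hne rfl
    exact ⟨fun h => hqq (Subtype.ext h), fun h => hqq (e.injective (Subtype.ext h))⟩
  · ext x
    simp only [Finset.mem_union, Finset.mem_image, Finset.mem_univ, true_and]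
    refine or_congr Iff.rfl ⟨fun hx => ?_, ?_⟩
    · exact ⟨_, ⟨e.symm ⟨x, hx⟩, rfl⟩, by simp⟩
    · rintro ⟨_, ⟨q, rfl⟩, rfl⟩
      exact (e q).2
  · ext x
    simp only [Finset.mem_union, Finset.mem_image, Finset.mem_univ, true_and]
    refine or_congr Iff.rfl ⟨fun hx => ⟨_, ⟨⟨x, hx⟩, rfl⟩, rfl⟩, ?_⟩
    rintro ⟨_, ⟨q, rfl⟩, rfl⟩
    exact q.2

/-- If the white vertices lie in an independent set `A`, and `P ⊆ A` is a set of blue vertices that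
have not forced yet, then `t` rounds suffice to color the at most `|P| * t` white vertices. The
vertices colored in one round serve as the set `P` of the next. -/
lemma exists_reach {V : Type*} [Fintype V] [DecidableEq V] (G : SimpleGraph V) {A : Finset V}
    (hA : ∀ u ∈ A, ∀ v ∈ A, u ≠ v → ¬ G.Adj u v) (t : ℕ) :
    ∀ S U P : Finset V, Sᶜ ⊆ A → P ⊆ A → P ⊆ S → U ⊆ S → Disjoint P U →
      Sᶜ.card ≤ P.card * t → ∃ T, Reach G t (S, U) T ∧ T.1 = Finset.univ := by
  induction t with
  | zero =>
    intro S U P _ _ _ _ _ hc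
    refine ⟨(S, U), rfl, ?_⟩
    have h0 : Sᶜ = ∅ := Finset.card_eq_zero.1 (by simpa using hc)
    simpa using h0
  | succ t ih =>
    intro S U P hSA hPA hPS hUS hPU hc
    obtain ⟨W, hW, hWc⟩ := Finset.exists_subset_card_eq (min_le_left Sᶜ.card P.card)
    obtain ⟨Q, hQ, hQc⟩ := Finset.exists_subset_card_eq (min_le_right Sᶜ.card P.card)
    have hWS : Disjoint W S := (disjoint_compl_left (a := S)).mono_left hW
    have hround : Round G (S, U) (S ∪ W, U ∪ Q) := by
      refine round_of_card_eq G (hQ.trans hPS) (hPU.mono_left hQ) ?_ hWS (hQc.trans hWc.symm)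
      intro v hv w hvw
      by_contra hw
      exact hA v (hPA (hQ hv)) w (hSA (Finset.mem_compl.2 hw)) hvw.ne hvw
    have hcompl : (S ∪ W)ᶜ = Sᶜ \ W := by
      ext x
      simp
    obtain ⟨T, hT, hTu⟩ := ih (S ∪ W) (U ∪ Q) W
      (hcompl ▸ Finset.sdiff_subset.trans hSA) (hW.trans hSA) Finset.subset_union_right
      (Finset.union_subset_union hUS Finset.Subset.rfl |>.trans
        (Finset.union_subset Finset.subset_union_left
          ((hQ.trans hPS).trans Finset.subset_union_left)))
      (hWS.mono_right (Finset.union_subset hUS (hQ.trans hPS)))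
      (by
        rw [hcompl, Finset.card_sdiff_of_subset hW, hWc]
        rcases le_total Sᶜ.card P.card with h | h
        · simp [h]
        · rw [min_eq_right h]
          rw [Nat.mul_succ] at hc
          omega)
    exact ⟨T, ⟨_, hround, hT⟩, hTu⟩

lemma throttling_le_s16 {V : Type*} [Fintype V] [DecidableEq V] (G : SimpleGraph V) {B : Finset V}
    {t : ℕ} (h : ∃ T, Reach G t (B, ∅) T ∧ T.1 = Finset.univ) :
    throttling G ≤ ((B.card + t : ℕ) : ℕ∞) := by
  push_cast
  exact (iInf_le _ B).trans (add_le_add le_rfl (sInf_le ⟨t, rfl, h⟩))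

lemma indepNumber_spec {V : Type*} [Fintype V] (G : SimpleGraph V) :
    (∃ A : Finset V, A.card = indepNumber G ∧ ∀ u ∈ A, ∀ v ∈ A, u ≠ v → ¬ G.Adj u v) ∧
      ∀ A : Finset V, (∀ u ∈ A, ∀ v ∈ A, u ≠ v → ¬ G.Adj u v) → A.card ≤ indepNumber G := by
  have hbdd : BddAbove {k | ∃ S : Finset V, S.card = k ∧
      ∀ u ∈ S, ∀ v ∈ S, u ≠ v → ¬ G.Adj u v} :=
    ⟨Fintype.card V, by rintro _ ⟨S, rfl, -⟩; exact S.card_le_univ⟩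
  refine ⟨Nat.sSup_mem ?_ hbdd, fun A hA => le_csSup hbdd ⟨A, rfl, hA⟩⟩
  exact ⟨0, ∅, by simp⟩

/-- The optimal choice of the parameters: `a` initial blue vertices in the independent set and `t`
rounds. The witnesses satisfy `a + t + 1 = ⌈2√α⌉`, stated here as
`a + t < 2√α`. -/
lemma exists_factors {α : ℕ} (hα : 0 < α) :
    ∃ a t : ℕ, 0 < a ∧ a ≤ α ∧ α ≤ a * (t + 1) ∧ ((a + t : ℕ) : ℝ) < 2 * Real.sqrt α := by
  have hs0 : 0 ≤ Real.sqrt α := Real.sqrt_nonneg _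
  have hs : Real.sqrt α * Real.sqrt α = α := Real.mul_self_sqrt (Nat.cast_nonneg α)
  have hα1 : (1 : ℝ) ≤ α := by exact_mod_cast hα
  have hs1 : 1 ≤ Real.sqrt α := by simpa using Real.sqrt_le_sqrt hα1
  obtain ⟨m, hm⟩ : ∃ m, m = ⌈2 * Real.sqrt α⌉₊ := ⟨_, rfl⟩
  have hle : 2 * Real.sqrt α ≤ m := hm ▸ Nat.le_ceil _
  have hlt : (m : ℝ) < 2 * Real.sqrt α + 1 := hm ▸ Nat.ceil_lt_add_one (by positivity)
  have hm2 : 2 ≤ m := by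
    have : (2 : ℝ) ≤ m := by linarith
    exact_mod_cast this
  have hsq : 4 * α ≤ m * m := by
    have : (4 * α : ℝ) ≤ m * m := by nlinarith
    exact_mod_cast this
  have hmα : m < 2 * α + 1 := by
    have : (m : ℝ) < 2 * α + 1 := by nlinarith
    exact_mod_cast this
  refine ⟨m / 2, m - m / 2 - 1, by omega, by omega, ?_, ?_⟩
  · rcases Nat.even_or_odd' m with ⟨k, hk | hk⟩
    · have h1 : m / 2 = k := by omega
      have h2 : m - k - 1 + 1 = k := by omega
      rw [h1, h2]
      subst hk
      nlinarith
    · have h1 : m / 2 = k := by omega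
      have h2 : m - k - 1 + 1 = k + 1 := by omega
      rw [h1, h2]
      subst hk
      -- `4α ≤ 4k(k+1) + 1` gives the claim by integrality.
      have : 4 * α ≤ 4 * (k * (k + 1)) + 1 := by linarith
      omega
  · have h : m / 2 + (m - m / 2 - 1) + 1 = m := by omega
    have h' : ((m / 2 + (m - m / 2 - 1) : ℕ) : ℝ) + 1 = m := by exact_mod_cast h
    linarith

end Hopping

/-- If `G` has `n` vertices and independence number `α`, then
`th_H(G) ≤ ⌈n - α + 2√α - 1⌉`. -/
theorem hoppingThrottling_le_of_indepNumber {V : Type*} [Fintype V] [DecidableEq V]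
    (G : SimpleGraph V) :
    Hopping.throttling G ≤
      (⌈(Fintype.card V : ℝ) - (Hopping.indepNumber G : ℝ) +
          2 * Real.sqrt (Hopping.indepNumber G : ℝ) - 1⌉₊ : ℕ∞) := by
  obtain ⟨⟨A, hAc, hA⟩, hmax⟩ := Hopping.indepNumber_spec G
  rcases Nat.eq_zero_or_pos (Hopping.indepNumber G) with h0 | hpos
  · -- A single vertex is independent, so independence number zero forces `V` to be empty.
    have hV : IsEmpty V := ⟨fun v => by
      have := hmax {v} (by simp)
      simp [h0] at this⟩
    have h : ∃ T, Hopping.Reach G 0 (∅, ∅) T ∧ T.1 = Finset.univ :=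
      ⟨(∅, ∅), rfl, Subsingleton.elim _ _⟩
    exact (Hopping.throttling_le_s16 G h).trans (by simp)
  obtain ⟨a, t, ha, haα, hat, hlt⟩ := Hopping.exists_factors hpos
  obtain ⟨P, hPA, hPc⟩ := Finset.exists_subset_card_eq (hAc ▸ haα)
  have hcompl : (Aᶜ ∪ P)ᶜ = A \ P := by
    ext x
    simp
  have hreach := Hopping.exists_reach G hA t (Aᶜ ∪ P) ∅ P (hcompl ▸ Finset.sdiff_subset) hPA
    Finset.subset_union_right (Finset.empty_subset _) (Finset.disjoint_empty_right _) (by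
      rw [hcompl, Finset.card_sdiff_of_subset hPA, hAc, hPc]
      rw [Nat.mul_succ] at hat
      omega)
  refine (Hopping.throttling_le_s16 G hreach).trans ?_
  have hB : (Aᶜ ∪ P).card + Hopping.indepNumber G = Fintype.card V + a := by
    rw [Finset.card_union_of_disjoint ((disjoint_compl_left (a := A)).mono_right hPA), hPc,
      ← hAc, Finset.card_compl]
    have := A.card_le_univ
    omega
  obtain ⟨k, hk⟩ : ∃ k, (Aᶜ ∪ P).card + t = k + 1 :=
    ⟨(Aᶜ ∪ P).card + t - 1, by have := A.card_le_univ; omega⟩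
  have hk' : k + 1 + Hopping.indepNumber G = Fintype.card V + (a + t) := by omega
  have hkR : (k : ℝ) + 1 + Hopping.indepNumber G = Fintype.card V + ((a + t : ℕ) : ℝ) := by
    exact_mod_cast hk'
  rw [hk]
  -- For naturals, `k + 1 ≤ ⌈x⌉₊` is the strict inequality `k < x`.
  exact Nat.cast_le.2 (Nat.succ_le_of_lt (Nat.lt_ceil.2 (by linarith)))
end
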